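/- Let n ≥ 3, γ > −min(2,n), α > 1 with α ≥ max(1, 1+γ/n), γ/(α−1) < s ≤ n, α ≤ q ≤ ∞, 0 < r ≤ ∞, and assume s/n + 1/q > 0, s/n + 1/q < 1 or (s/n + 1/q = 1 and r ≤ 1), and the double critical condition s/n + 1/q = 1/q_c = 1/Q_c. Assume moreover that either (q < ∞ and r ≤ α − 1) or r ≤ min(1, α − 1). Let T > 0 and u₀ ∈ 𝒦̇^s_{q,r}(ℝⁿ). If u₁, u₂ : [0,T] → 𝒦̇^s_{q,r}(ℝⁿ) are mild solutions of the Hardy–Hénon equation on (0,T) with initial data u₀, with u₁(0) = u₂(0) = u₀ and with t ↦ u_i(t) continuous on [0,T] with respect to the Herz quasi-norm ‖·‖_{K̇^s_{q,r}} for i = 1,2, then for every t ∈ [0,T], u₁(t) = u₂(t) almost everywhere on ℝⁿ. -/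

import Mathlib

open MeasureTheory Set ENNReal Filter

noncomputable section

abbrev Euc (n : ℕ) : Type := EuclideanSpace ℝ (Fin n)

def annulus (n : ℕ) (j : ℤ) : Set (Euc n) :=
  {x : Euc n | (2 : ℝ) ^ (j - 1) ≤ ‖x‖ ∧ ‖x‖ < (2 : ℝ) ^ j}

def herzNorm (n : ℕ) (s : ℝ) (q r : ℝ≥0∞) (f : Euc n → ℝ) : ℝ≥0∞ :=
  if r = ⊤ then
    ⨆ j : ℤ, ENNReal.ofReal ((2 : ℝ) ^ ((j : ℝ) * s)) *
      eLpNorm ((annulus n j).indicator f) q volume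
  else
    (∑' j : ℤ, (ENNReal.ofReal ((2 : ℝ) ^ ((j : ℝ) * s)) *
      eLpNorm ((annulus n j).indicator f) q volume) ^ r.toReal) ^ (1 / r.toReal)

def heatKernel (n : ℕ) (t : ℝ) (x y : Euc n) : ℝ :=
  (4 * Real.pi * t) ^ (-(n : ℝ) / 2) * Real.exp (-‖x - y‖ ^ 2 / (4 * t))

def heatSemigroup (n : ℕ) (t : ℝ) (f : Euc n → ℝ) (x : Euc n) : ℝ :=
  ∫ y, heatKernel n t x y * f y

def nonlin (n : ℕ) (γ α : ℝ) (v : Euc n → ℝ) (x : Euc n) : ℝ :=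
  ‖x‖ ^ γ * |v x| ^ (α - 1) * v x

/-- `u` is a mild solution of the Hardy–Hénon equation
`∂ₜu - Δu = |x|^γ |u|^{α-1} u` on `(0,T) × ℝⁿ` with initial data `u₀`:
`u` is measurable, and for a.e. `(t,x) ∈ (0,T) × ℝⁿ` the relevant integrals
converge absolutely and the Duhamel formula holds. -/
def IsMildSolution (n : ℕ) (γ α T : ℝ) (u₀ : Euc n → ℝ) (u : ℝ → Euc n → ℝ) : Prop :=
  Measurable (Function.uncurry u) ∧
  ∀ᵐ p : ℝ × Euc n ∂((volume.restrict (Set.Ioo (0 : ℝ) T)).prod volume),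
    (Integrable (fun y => heatKernel n p.1 p.2 y * u₀ y) volume) ∧
    (Integrable (fun z : ℝ × Euc n =>
        heatKernel n (p.1 - z.1) p.2 z.2 * nonlin n γ α (u z.1) z.2)
      ((volume.restrict (Set.Ioo (0 : ℝ) p.1)).prod volume)) ∧
    u p.1 p.2 = heatSemigroup n p.1 u₀ p.2 +
      ∫ z : ℝ × Euc n, heatKernel n (p.1 - z.1) p.2 z.2 * nonlin n γ α (u z.1) z.2
        ∂((volume.restrict (Set.Ioo (0 : ℝ) p.1)).prod volume)

/-- `f` belongs to `𝒦̇^s_{q,r}(ℝⁿ)`, the closure of `C_c^∞(ℝⁿ)` in the Herz space. -/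
def MemHerzClosure (n : ℕ) (s : ℝ) (q r : ℝ≥0∞) (f : Euc n → ℝ) : Prop :=
  herzNorm n s q r f < ⊤ ∧
  ∀ ε : ℝ, 0 < ε → ∃ g : Euc n → ℝ, ContDiff ℝ (⊤ : ℕ∞) g ∧ HasCompactSupport g ∧
    herzNorm n s q r (fun x => f x - g x) < ENNReal.ofReal ε

/-- `t ↦ u t` is continuous on `I` with respect to the Herz quasi-norm. -/
def HerzContinuousOn (n : ℕ) (s : ℝ) (q r : ℝ≥0∞) (u : ℝ → Euc n → ℝ) (I : Set ℝ) : Prop :=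
  ∀ t₀ ∈ I, ∀ ε : ℝ, 0 < ε → ∃ δ : ℝ, 0 < δ ∧ ∀ t ∈ I, |t - t₀| < δ →
    herzNorm n s q r (fun x => u t x - u t₀ x) < ENNReal.ofReal ε

/-! ### Elementary facts -/

lemma hz_ofReal_two (x : ℝ) : ENNReal.ofReal ((2 : ℝ) ^ x) = (2 : ℝ≥0∞) ^ x := by
  rw [← ENNReal.ofReal_rpow_of_pos (by norm_num)]; norm_num

lemma hz_two_add (x y : ℝ) : (2 : ℝ≥0∞) ^ x * (2 : ℝ≥0∞) ^ y = (2 : ℝ≥0∞) ^ (x + y) :=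
  (ENNReal.rpow_add x y (by norm_num) (by norm_num)).symm

lemma hz_two_lt (x : ℝ) : (2 : ℝ≥0∞) ^ x < ⊤ :=
  lt_top_iff_ne_top.2 (ENNReal.rpow_ne_top_of_ne_zero (by norm_num) (by norm_num))

lemma hz_measurableSet_annulus (n : ℕ) (j : ℤ) : MeasurableSet (annulus n j) := by
  apply MeasurableSet.inter
  · exact measurableSet_le measurable_const measurable_norm
  · exact measurableSet_lt measurable_norm measurable_const

lemma hz_annulus_disjoint (n : ℕ) : Pairwise (Function.onFun Disjoint (annulus n)) := by
  intro i j hij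
  rw [Function.onFun, Set.disjoint_left]
  rintro x ⟨h1, h2⟩ ⟨h3, h4⟩
  have a : (i - 1) < j := (zpow_lt_zpow_iff_right₀ (by norm_num : (1 : ℝ) < 2)).1 (h1.trans_lt h4)
  have b : (j - 1) < i := (zpow_lt_zpow_iff_right₀ (by norm_num : (1 : ℝ) < 2)).1 (h3.trans_lt h2)
  omega

lemma hz_iUnion_annulus (n : ℕ) : (⋃ j, annulus n j) = {(0 : Euc n)}ᶜ := by
  ext x
  simp only [Set.mem_iUnion, Set.mem_compl_iff, Set.mem_singleton_iff]
  constructor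
  · rintro ⟨j, h1, h2⟩ rfl
    have : (0 : ℝ) < (2 : ℝ) ^ (j - 1) := by positivity
    simp only [norm_zero] at h1
    linarith
  · intro hx
    obtain ⟨k, hk⟩ := exists_mem_Ico_zpow (norm_pos_iff.2 hx) (by norm_num : (1 : ℝ) < 2)
    exact ⟨k + 1, by simpa [annulus] using hk⟩

lemma hz_lintegral_eq_tsum (n : ℕ) (hn : 3 ≤ n) (F : Euc n → ℝ≥0∞) :
    ∫⁻ x, F x = ∑' j : ℤ, ∫⁻ x in annulus n j, F x := by
  rw [← lintegral_iUnion (hz_measurableSet_annulus n) (hz_annulus_disjoint n) F,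
    hz_iUnion_annulus]
  have : Nonempty (Fin n) := ⟨⟨0, by omega⟩⟩
  have : Nontrivial (Euc n) := inferInstance
  have : (volume : Measure (Euc n)).restrict {(0 : Euc n)}ᶜ = volume :=
    Measure.restrict_eq_self_of_ae_mem (Measure.ae_ne volume (0 : Euc n))
  rw [this]

lemma hz_annulus_volume (n : ℕ) (hn : 3 ≤ n) (j : ℤ) :
    volume (annulus n j) ≤ (2 : ℝ≥0∞) ^ ((j : ℝ) * n) * volume (Metric.ball (0 : Euc n) 1) := by
  have : Nonempty (Fin n) := ⟨⟨0, by omega⟩⟩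
  have : Nontrivial (Euc n) := inferInstance
  have h1 : annulus n j ⊆ Metric.ball (0 : Euc n) ((2 : ℝ) ^ j) := by
    intro x hx
    simpa using hx.2
  refine (measure_mono h1).trans (le_of_eq ?_)
  rw [Measure.addHaar_ball _ _ (by positivity), ← hz_ofReal_two]
  congr 2
  rw [finrank_euclideanSpace_fin, Real.rpow_mul (by norm_num), Real.rpow_intCast, Real.rpow_natCast]

lemma hz_weight_le (n : ℕ) (γ : ℝ) (j : ℤ) (x : Euc n) (hx : x ∈ annulus n j) :
    ENNReal.ofReal (‖x‖ ^ γ) ≤ (2 : ℝ≥0∞) ^ |γ| * (2 : ℝ≥0∞) ^ ((j : ℝ) * γ) := by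
  rw [hz_two_add, ← hz_ofReal_two]
  apply ENNReal.ofReal_le_ofReal
  obtain ⟨h1, h2⟩ := hx
  have hpos : 0 < ‖x‖ := lt_of_lt_of_le (by positivity) h1
  rcases le_or_gt 0 γ with h | h
  · calc ‖x‖ ^ γ ≤ ((2 : ℝ) ^ j) ^ γ := Real.rpow_le_rpow hpos.le h2.le h
      _ = (2 : ℝ) ^ ((j : ℝ) * γ) := by rw [← Real.rpow_intCast, ← Real.rpow_mul (by norm_num)]
      _ ≤ _ := Real.rpow_le_rpow_of_exponent_le (by norm_num) (by linarith [abs_nonneg γ])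
  · calc ‖x‖ ^ γ ≤ ((2 : ℝ) ^ (j - 1)) ^ γ :=
          Real.rpow_le_rpow_of_nonpos (by positivity) h1 h.le
      _ = (2 : ℝ) ^ (((j - 1 : ℤ) : ℝ) * γ) := by
          rw [← Real.rpow_intCast, ← Real.rpow_mul (by norm_num)]
      _ ≤ _ := Real.rpow_le_rpow_of_exponent_le (by norm_num) (by
          rw [abs_of_neg h]; push_cast; linarith)

/-- the dyadic pieces of the Herz norm -/
def hzD (n : ℕ) (s : ℝ) (q : ℝ≥0∞) (f : Euc n → ℝ) (j : ℤ) : ℝ≥0∞ :=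
  (2 : ℝ≥0∞) ^ ((j : ℝ) * s) * eLpNorm ((annulus n j).indicator f) q volume

/-- the weighted power -/
def hzV (n : ℕ) (γ β : ℝ) (f : Euc n → ℝ) (x : Euc n) : ℝ≥0∞ :=
  ENNReal.ofReal (‖x‖ ^ γ) * ‖f x‖ₑ ^ β

lemma hzV_measurable (n : ℕ) (γ β : ℝ) (f : Euc n → ℝ) (hf : Measurable f) :
    Measurable (hzV n γ β f) := by
  unfold hzV; fun_prop

lemma hz_tsum_rpow_le (a : ℤ → ℝ≥0∞) (p : ℝ) (hp : 1 ≤ p) :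
    ∑' j, a j ^ p ≤ (∑' j, a j) ^ p := by
  have h : ∀ j, a j ^ p ≤ a j * (∑' j, a j) ^ (p - 1) := by
    intro j
    have : a j ^ p = a j * a j ^ (p - 1) := by
      nth_rewrite 2 [← ENNReal.rpow_one (a j)]
      rw [← ENNReal.rpow_add_of_nonneg _ _ (by norm_num) (by linarith)]
      congr 1; ring
    rw [this]
    gcongr
    · exact ENNReal.le_tsum j
  refine (ENNReal.tsum_le_tsum h).trans (le_of_eq ?_)
  rw [ENNReal.tsum_mul_right]
  nth_rewrite 1 [← ENNReal.rpow_one (∑' j, a j)]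
  rw [← ENNReal.rpow_add_of_nonneg _ _ (by norm_num) (by linarith)]
  congr 1; ring

lemma hz_tsum_le_herz (n : ℕ) (s : ℝ) (q r : ℝ≥0∞) (β : ℝ) (hr : 0 < r)
    (hrβ : r ≤ ENNReal.ofReal β) (f : Euc n → ℝ) :
    ∑' j, hzD n s q f j ^ β ≤ herzNorm n s q r f ^ β := by
  have hrt : r ≠ ⊤ := ne_top_of_le_ne_top ENNReal.ofReal_ne_top hrβ
  have hr0 : 0 < r.toReal := ENNReal.toReal_pos hr.ne' hrt
  have hβ0 : 0 < β := by
    by_contra h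
    rw [ENNReal.ofReal_of_nonpos (not_lt.1 h)] at hrβ
    exact absurd (hr.trans_le hrβ) (lt_irrefl _)
  have hle : r.toReal ≤ β := ENNReal.toReal_le_of_le_ofReal hβ0.le hrβ
  unfold herzNorm
  rw [if_neg hrt, ← ENNReal.rpow_mul]
  have := hz_tsum_rpow_le (fun j => hzD n s q f j ^ r.toReal) (β / r.toReal)
    ((one_le_div hr0).2 hle)
  simp only [← ENNReal.rpow_mul] at this
  have e : r.toReal * (β / r.toReal) = β := by field_simp
  simp only [e] at this
  convert this using 2
  · congr 1
    ext j
    rw [hz_ofReal_two]; rfl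
  · field_simp

/-- basic estimate on an annulus -/
lemma hz_annulus_bound (n : ℕ) (hn : 3 ≤ n) (γ s β p : ℝ) (q : ℝ≥0∞) (hβ : 0 < β) (hp : 0 < p)
    (hq : ENNReal.ofReal (β * p) ≤ q) :
    ∃ C : ℝ≥0∞, C < ⊤ ∧ ∀ f : Euc n → ℝ, Measurable f → ∀ j : ℤ,
      (∫⁻ x in annulus n j, hzV n γ β f x ^ p) ^ (1 / p) ≤
        C * (2 : ℝ≥0∞) ^ ((j : ℝ) * (γ + n / p - β * (s + n * (q⁻¹).toReal))) *
          hzD n s q f j ^ β := by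
  set ω := volume (Metric.ball (0 : Euc n) 1) with hω
  have hωt : ω ≠ ⊤ := measure_ball_lt_top.ne
  have hβp : 0 < β * p := by positivity
  have he : 1 / q.toReal = (q⁻¹).toReal := by rw [ENNReal.toReal_inv, one_div]
  have hexp : 0 ≤ 1 / (β * p) - (q⁻¹).toReal := by
    rw [← he]
    rcases eq_or_ne q ⊤ with h | h
    · simp [h]; positivity
    · have : β * p ≤ q.toReal := (ENNReal.ofReal_le_iff_le_toReal h).1 hq
      have := one_div_le_one_div_of_le hβp this
      linarith
  refine ⟨(2 : ℝ≥0∞) ^ |γ| * (ω ^ (1 / (β * p) - (q⁻¹).toReal)) ^ β, ?_, ?_⟩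
  · exact ENNReal.mul_lt_top (hz_two_lt _) (lt_top_iff_ne_top.2
      (ENNReal.rpow_ne_top_of_nonneg hβ.le (ENNReal.rpow_ne_top_of_nonneg hexp hωt)))
  intro f hf j
  set A := annulus n j
  have hA : MeasurableSet A := hz_measurableSet_annulus n j
  set N := eLpNorm (A.indicator f) q volume with hN
  have key : eLpNorm f (ENNReal.ofReal (β * p)) (volume.restrict A) ≤
      N * ((2 : ℝ≥0∞) ^ ((j : ℝ) * n) * ω) ^ (1 / (β * p) - (q⁻¹).toReal) := by
    have := eLpNorm_le_eLpNorm_mul_rpow_measure_univ (μ := volume.restrict A) hq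
      hf.aestronglyMeasurable
    rw [ENNReal.toReal_ofReal hβp.le, he, ← eLpNorm_indicator_eq_eLpNorm_restrict hA,
      ← eLpNorm_indicator_eq_eLpNorm_restrict hA, Measure.restrict_apply_univ] at this
    rw [← eLpNorm_indicator_eq_eLpNorm_restrict hA]
    refine this.trans ?_
    gcongr
    exact hz_annulus_volume n hn j
  rw [eLpNorm_eq_lintegral_rpow_enorm_toReal (by simpa using hβp) ENNReal.ofReal_ne_top,
    ENNReal.toReal_ofReal hβp.le] at key
  have step : ∫⁻ x in A, hzV n γ β f x ^ p ≤
      ((2 : ℝ≥0∞) ^ |γ| * (2 : ℝ≥0∞) ^ ((j : ℝ) * γ)) ^ p * ∫⁻ x in A, ‖f x‖ₑ ^ (β * p) := by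
    rw [← lintegral_const_mul _ (by fun_prop)]
    apply setLIntegral_mono (by fun_prop)
    intro x hx
    unfold hzV
    rw [ENNReal.mul_rpow_of_nonneg _ _ hp.le, ← ENNReal.rpow_mul]
    gcongr
    exact hz_weight_le n γ j x hx
  have h2 := ENNReal.rpow_le_rpow key hβ.le
  rw [← ENNReal.rpow_mul, show 1 / (β * p) * β = 1 / p by field_simp] at h2
  calc _ ≤ (((2 : ℝ≥0∞) ^ |γ| * (2 : ℝ≥0∞) ^ ((j : ℝ) * γ)) ^ p *
          ∫⁻ x in A, ‖f x‖ₑ ^ (β * p)) ^ (1 / p) := by gcongr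
    _ = ((2 : ℝ≥0∞) ^ |γ| * (2 : ℝ≥0∞) ^ ((j : ℝ) * γ)) *
          (∫⁻ x in A, ‖f x‖ₑ ^ (β * p)) ^ (1 / p) := by
        rw [ENNReal.mul_rpow_of_nonneg _ _ (by positivity), ← ENNReal.rpow_mul,
          mul_one_div_cancel hp.ne', ENNReal.rpow_one]
    _ ≤ ((2 : ℝ≥0∞) ^ |γ| * (2 : ℝ≥0∞) ^ ((j : ℝ) * γ)) *
          (N * ((2 : ℝ≥0∞) ^ ((j : ℝ) * n) * ω) ^ (1 / (β * p) - (q⁻¹).toReal)) ^ β := by gcongr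
    _ = _ := by
        have e1 : hzD n s q f j = (2 : ℝ≥0∞) ^ ((j : ℝ) * s) * N := rfl
        rw [e1, ENNReal.mul_rpow_of_nonneg _ _ hβ.le, ENNReal.mul_rpow_of_nonneg _ _ hβ.le,
          ENNReal.mul_rpow_of_nonneg _ _ hexp, ENNReal.mul_rpow_of_nonneg _ _ hβ.le,
          ← ENNReal.rpow_mul, ← ENNReal.rpow_mul, ← ENNReal.rpow_mul]
        have e2 : (2 : ℝ≥0∞) ^ ((j : ℝ) * γ) *
            (2 : ℝ≥0∞) ^ ((j : ℝ) * n * (1 / (β * p) - (q⁻¹).toReal) * β) =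
            (2 : ℝ≥0∞) ^ ((j : ℝ) * (γ + n / p - β * (s + n * (q⁻¹).toReal))) *
            (2 : ℝ≥0∞) ^ ((j : ℝ) * s * β) := by
          rw [hz_two_add, hz_two_add]
          congr 1
          field_simp
          ring
        calc _ = (2 : ℝ≥0∞) ^ |γ| * (ω ^ (1 / (β * p) - (q⁻¹).toReal)) ^ β * N ^ β *
              ((2 : ℝ≥0∞) ^ ((j : ℝ) * γ) *
            (2 : ℝ≥0∞) ^ ((j : ℝ) * n * (1 / (β * p) - (q⁻¹).toReal) * β)) := by
              simp only [← ENNReal.rpow_mul]; ring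
          _ = _ := by rw [e2]; simp only [← ENNReal.rpow_mul]; ring

/-! ### Heat kernel -/

lemma hz_heat_nonneg (n : ℕ) (t : ℝ) (ht : 0 < t) (x y : Euc n) : 0 ≤ heatKernel n t x y := by
  unfold heatKernel; positivity

lemma hz_heat_le (n : ℕ) (t : ℝ) (ht : 0 < t) (x y : Euc n) :
    ENNReal.ofReal (heatKernel n t x y) ≤ ENNReal.ofReal t ^ (-(n : ℝ) / 2) := by
  rw [ENNReal.ofReal_rpow_of_pos ht]
  apply ENNReal.ofReal_le_ofReal
  unfold heatKernel
  have h1 : Real.exp (-‖x - y‖ ^ 2 / (4 * t)) ≤ 1 := by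
    rw [Real.exp_le_one_iff]
    apply div_nonpos_of_nonpos_of_nonneg
    · simp
    · positivity
  have h2 : (4 * Real.pi * t) ^ (-(n : ℝ) / 2) ≤ t ^ (-(n : ℝ) / 2) := by
    apply Real.rpow_le_rpow_of_nonpos ht
    · nlinarith [Real.pi_gt_three]
    · have : (0 : ℝ) ≤ n := Nat.cast_nonneg n
      linarith
  calc _ ≤ (4 * Real.pi * t) ^ (-(n : ℝ) / 2) * 1 := by gcongr
    _ ≤ _ := by simpa using h2

lemma hz_heat_measurable (n : ℕ) : Measurable (fun z : ℝ × Euc n × Euc n =>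
    heatKernel n z.1 z.2.1 z.2.2) := by
  unfold heatKernel; fun_prop

lemma hz_heat_integral (n : ℕ) (t : ℝ) (ht : 0 < t) (y : Euc n) :
    ∫⁻ x, ENNReal.ofReal (heatKernel n t x y) = 1 := by
  have h1 : ∫ x : Euc n, heatKernel n t x y = 1 := by
    unfold heatKernel
    rw [integral_const_mul]
    have h := integral_sub_right_eq_self (μ := (volume : Measure (Euc n)))
      (fun x : Euc n => Real.exp (-‖x‖ ^ 2 / (4 * t))) y
    rw [h]
    have h2 := GaussianFourier.integral_rexp_neg_mul_sq_norm (V := Euc n)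
      (b := 1 / (4 * t)) (by positivity)
    have h3 : ∀ x : Euc n, -‖x‖ ^ 2 / (4 * t) = -(1 / (4 * t)) * ‖x‖ ^ 2 := by
      intro x; ring
    simp only [h3]
    rw [h2, finrank_euclideanSpace_fin,
      show Real.pi / (1 / (4 * t)) = 4 * Real.pi * t by field_simp,
      ← Real.rpow_add (by positivity)]
    rw [show -(n : ℝ) / 2 + n / 2 = 0 by ring, Real.rpow_zero]
  have hi : Integrable (fun x => heatKernel n t x y) := by
    apply Integrable.of_integral_ne_zero
    rw [h1]; norm_num
  rw [← ofReal_integral_eq_lintegral_ofReal hi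
    (Eventually.of_forall fun x => hz_heat_nonneg n t ht x y), h1]
  simp

lemma hz_heat_bound_one (n : ℕ) (t : ℝ) (ht : 0 < t) (y : Euc n) (μ : Measure (Euc n))
    (F : Euc n → ℝ≥0∞) (hF : Measurable F) :
    ∫⁻ x, ENNReal.ofReal (heatKernel n t x y) * F x ∂μ ≤
      ENNReal.ofReal t ^ (-(n : ℝ) / 2) * ∫⁻ x, F x ∂μ := by
  rw [← lintegral_const_mul _ hF]
  apply lintegral_mono
  intro x
  dsimp only
  gcongr
  exact hz_heat_le n t ht x y

lemma hz_heat_bound_p (n : ℕ) (t p : ℝ) (ht : 0 < t) (hp : 1 < p) (y : Euc n)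
    (A : Set (Euc n)) (F : Euc n → ℝ≥0∞) (hF : Measurable F) :
    ∫⁻ x in A, ENNReal.ofReal (heatKernel n t x y) * F x ≤
      ENNReal.ofReal t ^ (-(n / (2 * p)) : ℝ) * (∫⁻ x in A, F x ^ p) ^ (1 / p) := by
  have hp0 : 0 < p := by linarith
  set g : Euc n → ℝ≥0∞ := fun x => ENNReal.ofReal (heatKernel n t x y) with hg
  have hgm : Measurable g := by
    have := (hz_heat_measurable n).comp (measurable_const.prodMk
      (measurable_id.prodMk measurable_const) : Measurable fun x : Euc n => (t, x, y))
    exact this.ennreal_ofReal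
  have hc : p.HolderConjugate (Real.conjExponent p) := Real.HolderConjugate.conjExponent hp
  set p' := Real.conjExponent p
  have hp' : 0 < p' := hc.symm.pos
  have hsum : 1 / p + 1 / p' = 1 := by simpa using hc.inv_add_inv_eq_one
  have H := ENNReal.lintegral_mul_le_Lp_mul_Lq (volume.restrict A) hc
    (f := fun x => g x ^ (1 / p) * F x) (g := fun x => g x ^ (1 / p'))
    (by fun_prop) (by fun_prop)
  have e1 : ∀ x, ((fun x => g x ^ (1 / p) * F x) * (fun x => g x ^ (1 / p'))) x = g x * F x := by
    intro x
    simp only [Pi.mul_apply]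
    rw [mul_right_comm, ← ENNReal.rpow_add_of_nonneg _ _ (by positivity) (by positivity), hsum,
      ENNReal.rpow_one]
  simp only [e1] at H
  refine H.trans ?_
  have e2 : ∫⁻ x in A, (g x ^ (1 / p')) ^ p' ≤ 1 := by
    simp only [← ENNReal.rpow_mul, one_div_mul_cancel hp'.ne', ENNReal.rpow_one]
    exact (setLIntegral_le_lintegral _ _).trans (hz_heat_integral n t ht y).le
  have e3 : ∫⁻ x in A, (g x ^ (1 / p) * F x) ^ p ≤
      ENNReal.ofReal t ^ (-(n : ℝ) / 2) * ∫⁻ x in A, F x ^ p := by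
    rw [← lintegral_const_mul _ (by fun_prop)]
    apply lintegral_mono
    intro x
    dsimp only
    rw [ENNReal.mul_rpow_of_nonneg _ _ hp0.le, ← ENNReal.rpow_mul, one_div_mul_cancel hp0.ne',
      ENNReal.rpow_one]
    gcongr
    exact hz_heat_le n t ht x y
  calc _ ≤ (ENNReal.ofReal t ^ (-(n : ℝ) / 2) * ∫⁻ x in A, F x ^ p) ^ (1 / p) *
        1 ^ (1 / p') := by gcongr
    _ = _ := by
      rw [ENNReal.one_rpow, mul_one, ENNReal.mul_rpow_of_nonneg _ _ (by positivity),
        ← ENNReal.rpow_mul]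
      congr 2
      field_simp

/-! ### Time profile -/

/-- dyadic time profile -/
def hzPsi (a b L t : ℝ) : ℝ≥0∞ :=
  if t ≤ L then ENNReal.ofReal (t ^ (-a) * L ^ (a - 1)) else
    ENNReal.ofReal (t ^ (-b) * L ^ (b - 1))

lemma hzPsi_measurable (a b L : ℝ) : Measurable (hzPsi a b L) := by
  unfold hzPsi
  apply Measurable.ite (measurableSet_le measurable_id measurable_const) <;> fun_prop

lemma hzPsi_lintegral (a b L : ℝ) (ha : a < 1) (hb : 1 < b) (hL : 0 < L) :
    ∫⁻ t in Set.Ioi 0, hzPsi a b L t ≤ ENNReal.ofReal (1 / (1 - a)) +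
      ENNReal.ofReal (1 / (b - 1)) := by
  rw [← Set.Ioc_union_Ioi_eq_Ioi hL.le]
  refine (lintegral_union_le _ _ _).trans ?_
  gcongr
  · have e : ∫⁻ t in Set.Ioc 0 L, hzPsi a b L t =
        ∫⁻ t in Set.Ioc 0 L, ENNReal.ofReal (t ^ (-a) * L ^ (a - 1)) := by
      apply setLIntegral_congr_fun measurableSet_Ioc
      intro t ht
      simp [hzPsi, ht.2]
    have hi : IntegrableOn (fun t : ℝ => t ^ (-a) * L ^ (a - 1)) (Set.Ioc 0 L) := by
      have := (intervalIntegral.intervalIntegrable_rpow' (a := 0) (b := L) (r := -a)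
        (by linarith)).mul_const (L ^ (a - 1))
      exact (intervalIntegrable_iff_integrableOn_Ioc_of_le hL.le).1 this
    rw [e, ← ofReal_integral_eq_lintegral_ofReal hi]
    · apply ENNReal.ofReal_le_ofReal
      rw [integral_mul_const, ← intervalIntegral.integral_of_le hL.le,
        integral_rpow (Or.inl (by linarith)), Real.zero_rpow (by linarith), sub_zero,
        div_mul_eq_mul_div, ← Real.rpow_add hL]
      rw [show -a + 1 + (a - 1) = 0 by ring, Real.rpow_zero, show -a + 1 = 1 - a by ring]
    · filter_upwards [ae_restrict_mem measurableSet_Ioc] with t ht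
      have := ht.1
      simp only [Pi.zero_apply]
      positivity
  · have e : ∫⁻ t in Set.Ioi L, hzPsi a b L t =
        ∫⁻ t in Set.Ioi L, ENNReal.ofReal (t ^ (-b) * L ^ (b - 1)) := by
      apply setLIntegral_congr_fun measurableSet_Ioi
      intro t ht
      have : ¬ t ≤ L := not_le.2 ht
      simp [hzPsi, this]
    have hi : IntegrableOn (fun t : ℝ => t ^ (-b) * L ^ (b - 1)) (Set.Ioi L) :=
      (integrableOn_Ioi_rpow_of_lt (by linarith) hL).mul_const _
    rw [e, ← ofReal_integral_eq_lintegral_ofReal hi]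
    · apply ENNReal.ofReal_le_ofReal
      rw [integral_mul_const, integral_Ioi_rpow_of_lt (by linarith) hL,
        div_mul_eq_mul_div, neg_mul, ← Real.rpow_add hL]
      rw [show -b + 1 + (b - 1) = 0 by ring, Real.rpow_zero, show -b + 1 = -(b - 1) by ring,
        neg_div_neg_eq]
    · filter_upwards [ae_restrict_mem measurableSet_Ioi] with t ht
      have := hL.trans ht
      simp only [Pi.zero_apply]
      positivity

lemma hz_ofReal_profile (t a : ℝ) (ht : 0 < t) (j : ℤ) :
    ENNReal.ofReal (t ^ (-a) * ((2 : ℝ) ^ (2 * (j : ℝ))) ^ (a - 1)) =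
      ENNReal.ofReal t ^ (-a) * (2 : ℝ≥0∞) ^ ((j : ℝ) * (2 * a - 2)) := by
  rw [ENNReal.ofReal_mul (by positivity), ENNReal.ofReal_rpow_of_pos ht,
    ← Real.rpow_mul (by norm_num), hz_ofReal_two]
  congr 2
  ring

/-! ### Key estimates -/

lemma hz_key_kernel (n : ℕ) (hn : 3 ≤ n) (γ α s : ℝ) (q r : ℝ≥0∞) (hα : 1 < α)
    (hq : ENNReal.ofReal (α - 1) ≤ q) (p : ℝ) (hp : (n : ℝ) / 2 < p)
    (hpq : ENNReal.ofReal ((α - 1) * p) ≤ q)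
    (hr : 0 < r) (hrα : r ≤ ENNReal.ofReal (α - 1))
    (hcr : s + n * (q⁻¹).toReal = n - 2) (hγ : γ + 2 = (α - 1) * (n - 2)) :
    ∃ C : ℝ≥0∞, C < ⊤ ∧ ∀ f : Euc n → ℝ, Measurable f → ∃ κ : ℝ → ℝ≥0∞, Measurable κ ∧
      (∀ t : ℝ, 0 < t → ∀ y : Euc n,
        ∫⁻ x, ENNReal.ofReal (heatKernel n t x y) * hzV n γ (α - 1) f x ≤ κ t) ∧
      ∫⁻ t in Set.Ioi 0, κ t ≤ C * herzNorm n s q r f ^ (α - 1) := by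
  have hn3 : (3 : ℝ) ≤ n := by exact_mod_cast hn
  have hp1 : 1 < p := by linarith
  have hp0 : 0 < p := by linarith
  have hβ : 0 < α - 1 := by linarith
  obtain ⟨C₁, hC₁, H₁⟩ := hz_annulus_bound n hn γ s (α - 1) p q hβ hp0 hpq
  obtain ⟨C₂, hC₂, H₂⟩ := hz_annulus_bound n hn γ s (α - 1) 1 q hβ one_pos (by simpa using hq)
  set a : ℝ := n / (2 * p) with ha
  set b : ℝ := (n : ℝ) / 2 with hb
  have ha1 : a < 1 := by
    rw [ha, div_lt_one (by positivity)]; linarith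
  have hb1 : 1 < b := by rw [hb]; linarith
  set C₀ := ENNReal.ofReal (1 / (1 - a)) + ENNReal.ofReal (1 / (b - 1)) with hC₀
  refine ⟨(C₁ + C₂) * C₀, ENNReal.mul_lt_top (ENNReal.add_lt_top.2 ⟨hC₁, hC₂⟩)
    (by rw [hC₀]; exact ENNReal.add_lt_top.2 ⟨ENNReal.ofReal_lt_top, ENNReal.ofReal_lt_top⟩), ?_⟩
  intro f hf
  refine ⟨fun t => ∑' j : ℤ, (C₁ + C₂) * hzD n s q f j ^ (α - 1) *
    hzPsi a b ((2 : ℝ) ^ (2 * (j : ℝ))) t, ?_, ?_, ?_⟩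
  · apply Measurable.tsum
    intro j
    exact (hzPsi_measurable _ _ _).const_mul _
  · intro t ht y
    rw [hz_lintegral_eq_tsum n hn]
    apply ENNReal.tsum_le_tsum
    intro j
    have hVm := hzV_measurable n γ (α - 1) f hf
    unfold hzPsi
    split_ifs with h
    · rw [hz_ofReal_profile t a ht j]
      refine (hz_heat_bound_p n t p ht hp1 y _ _ hVm).trans ?_
      have := H₁ f hf j
      rw [hcr, show γ + n / p - (α - 1) * (n - 2) = 2 * a - 2 by
        rw [← hγ, ha]; field_simp; ring] at this
      calc _ ≤ ENNReal.ofReal t ^ (-a) *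
            (C₁ * (2 : ℝ≥0∞) ^ ((j : ℝ) * (2 * a - 2)) * hzD n s q f j ^ (α - 1)) := by gcongr
        _ ≤ ENNReal.ofReal t ^ (-a) * ((C₁ + C₂) * (2 : ℝ≥0∞) ^ ((j : ℝ) * (2 * a - 2)) *
              hzD n s q f j ^ (α - 1)) := by gcongr; exact le_self_add
        _ = _ := by ring
    · rw [hz_ofReal_profile t b ht j]
      refine (hz_heat_bound_one n t ht y _ _ hVm).trans ?_
      have := H₂ f hf j
      simp only [ENNReal.rpow_one, div_one] at this
      rw [hcr, show γ + n - (α - 1) * (n - 2) = 2 * b - 2 by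
        rw [← hγ, hb]; ring] at this
      rw [show -(n : ℝ) / 2 = -b by rw [hb]; ring]
      calc _ ≤ ENNReal.ofReal t ^ (-b) *
            (C₂ * (2 : ℝ≥0∞) ^ ((j : ℝ) * (2 * b - 2)) * hzD n s q f j ^ (α - 1)) := by gcongr
        _ ≤ ENNReal.ofReal t ^ (-b) * ((C₁ + C₂) * (2 : ℝ≥0∞) ^ ((j : ℝ) * (2 * b - 2)) *
              hzD n s q f j ^ (α - 1)) := by gcongr; exact le_add_self
        _ = _ := by ring
  · rw [lintegral_tsum (fun j => ((hzPsi_measurable _ _ _).const_mul _).aemeasurable)]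
    calc _ ≤ ∑' j : ℤ, (C₁ + C₂) * C₀ * hzD n s q f j ^ (α - 1) := by
          apply ENNReal.tsum_le_tsum
          intro j
          rw [lintegral_const_mul _ (hzPsi_measurable _ _ _)]
          calc _ ≤ (C₁ + C₂) * hzD n s q f j ^ (α - 1) * C₀ := by
                gcongr
                exact hzPsi_lintegral a b _ ha1 hb1 (by positivity)
            _ = _ := by ring
      _ ≤ _ := by
          rw [ENNReal.tsum_mul_left]
          gcongr
          exact hz_tsum_le_herz n s q r (α - 1) hr hrα f

lemma hz_key_L1 (n : ℕ) (hn : 3 ≤ n) (γ α s : ℝ) (q r : ℝ≥0∞) (hα : 1 < α)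
    (hq : ENNReal.ofReal α ≤ q) (hr : 0 < r) (hrα : r ≤ ENNReal.ofReal α)
    (hcr : s + n * (q⁻¹).toReal = n - 2) (hγ : γ + 2 = (α - 1) * (n - 2)) :
    ∃ C : ℝ≥0∞, C < ⊤ ∧ ∀ f : Euc n → ℝ, Measurable f →
      ∫⁻ x, hzV n γ α f x ≤ C * herzNorm n s q r f ^ α := by
  obtain ⟨C, hC, H⟩ := hz_annulus_bound n hn γ s α 1 q (by linarith) one_pos (by simpa using hq)
  refine ⟨C, hC, fun f hf => ?_⟩
  rw [hz_lintegral_eq_tsum n hn]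
  refine le_trans ?_ (mul_le_mul_right (hz_tsum_le_herz n s q r α hr hrα f) C)
  rw [← ENNReal.tsum_mul_left]
  apply ENNReal.tsum_le_tsum
  intro j
  have := H f hf j
  simp only [ENNReal.rpow_one, div_one] at this
  rw [hcr, show γ + n - α * (n - 2) = 0 by linarith] at this
  simpa using this

/-! ### Pointwise inequalities -/

lemma hz_quasi (A B : ℝ≥0∞) (β : ℝ) (hβ : 0 < β) :
    (A + B) ^ β ≤ (2 : ℝ≥0∞) ^ β * (A ^ β + B ^ β) := by
  have key : ∀ A B : ℝ≥0∞, A ≤ B → (A + B) ^ β ≤ (2 : ℝ≥0∞) ^ β * B ^ β := by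
    intro A B h
    rw [← ENNReal.mul_rpow_of_nonneg _ _ hβ.le, two_mul]
    gcongr
  rcases le_total A B with h | h
  · exact (key A B h).trans (by gcongr; exact le_add_self)
  · rw [add_comm A B]
    exact (key B A h).trans (by gcongr; exact le_self_add)

lemma hz_core (α a b : ℝ) (hα : 1 < α) (hb : 0 ≤ b) (hab : b ≤ a) :
    a ^ (α - 1) * a - b ^ (α - 1) * b ≤ α * a ^ (α - 1) * (a - b) := by
  rcases hb.eq_or_lt with h | h
  · subst h
    have := Real.rpow_nonneg hab (α - 1)
    have := mul_nonneg this hab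
    nlinarith
  have ha : 0 < a := h.trans_le hab
  have h1 : a ^ (α - 1) * a = a ^ α := by
    rw [← Real.rpow_add_one ha.ne']; congr 1; ring
  have h2 : b ^ (α - 1) * b = b ^ α := by
    rw [← Real.rpow_add_one h.ne']; congr 1; ring
  have h3 := one_add_mul_self_le_rpow_one_add (s := b / a - 1)
    (by have : 0 ≤ b / a := by positivity
        linarith) hα.le
  rw [show 1 + (b / a - 1) = b / a by ring, Real.div_rpow hb ha.le,
    le_div_iff₀ (by positivity)] at h3
  have h4 : (1 + α * (b / a - 1)) * a ^ α = a ^ α - α * a ^ (α - 1) * (a - b) := by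
    rw [← h1]; field_simp; ring
  rw [h1, h2]
  linarith

lemma hz_lip (α a b : ℝ) (hα : 1 < α) :
    |(|a| ^ (α - 1) * a - |b| ^ (α - 1) * b)| ≤
      α * (|a| ^ (α - 1) + |b| ^ (α - 1)) * |a - b| := by
  have pos : ∀ c : ℝ, 0 ≤ |c| ^ (α - 1) := fun c => Real.rpow_nonneg (abs_nonneg c) _
  -- the case `0 ≤ a`, `|b| ≤ a`
  have key : ∀ a b : ℝ, 0 ≤ a → |b| ≤ a → |(|a| ^ (α - 1) * a - |b| ^ (α - 1) * b)| ≤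
      α * |a| ^ (α - 1) * |a - b| := by
    intro a b ha hab
    have hmono : |b| ^ (α - 1) ≤ |a| ^ (α - 1) := by
      apply Real.rpow_le_rpow (abs_nonneg _) _ (by linarith)
      rwa [abs_of_nonneg ha]
    have hba : b ≤ a := (le_abs_self b).trans hab
    rcases le_total 0 b with hb | hb
    · have h0 : |b| ^ (α - 1) * b ≤ |a| ^ (α - 1) * a :=
        mul_le_mul hmono hba hb (pos a)
      rw [abs_of_nonneg (sub_nonneg.2 h0), abs_of_nonneg (sub_nonneg.2 hba), abs_of_nonneg ha,
        abs_of_nonneg hb]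
      exact hz_core α a b hα hb hba
    · have h0 : |b| ^ (α - 1) * b ≤ 0 := mul_nonpos_of_nonneg_of_nonpos (pos b) hb
      have h1 : 0 ≤ |a| ^ (α - 1) * a := mul_nonneg (pos a) ha
      rw [abs_of_nonneg (by linarith), abs_of_nonneg (sub_nonneg.2 hba)]
      have h2 : |b| ^ (α - 1) * (-b) ≤ |a| ^ (α - 1) * (-b) :=
        mul_le_mul_of_nonneg_right hmono (by linarith)
      have h3 : 0 ≤ |a| ^ (α - 1) * (a - b) := mul_nonneg (pos a) (by linarith)
      nlinarith
  have key2 : ∀ a b : ℝ, |b| ≤ |a| → |(|a| ^ (α - 1) * a - |b| ^ (α - 1) * b)| ≤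
      α * |a| ^ (α - 1) * |a - b| := by
    intro a b h
    rcases le_total 0 a with ha | ha
    · exact key a b ha (by rwa [abs_of_nonneg ha] at h)
    · have := key (-a) (-b) (by linarith) (by rwa [abs_neg, ← abs_of_nonpos ha])
      rw [abs_neg, abs_neg] at this
      have e1 : |a| ^ (α - 1) * -a - |b| ^ (α - 1) * -b =
        -(|a| ^ (α - 1) * a - |b| ^ (α - 1) * b) := by ring
      have e2 : -a - -b = -(a - b) := by ring
      rwa [e1, e2, abs_neg, abs_neg] at this
  have hα0 : 0 < α := by linarith
  rcases le_total |b| |a| with h | h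
  · refine (key2 a b h).trans ?_
    have := pos b
    gcongr
    linarith
  · rw [abs_sub_comm, abs_sub_comm a b]
    refine (key2 b a h).trans ?_
    have := pos a
    gcongr
    linarith

lemma hzV_eq (n : ℕ) (γ β : ℝ) (hβ : 0 < β) (f : Euc n → ℝ) (x : Euc n) :
    hzV n γ β f x = ENNReal.ofReal (‖x‖ ^ γ * |f x| ^ β) := by
  unfold hzV
  rw [ENNReal.ofReal_mul (by positivity), Real.enorm_eq_ofReal_abs,
    ENNReal.ofReal_rpow_of_nonneg (abs_nonneg _) hβ.le]

/-- the potential -/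
def hzPot (n : ℕ) (γ α : ℝ) (f g : Euc n → ℝ) (x : Euc n) : ℝ≥0∞ :=
  ENNReal.ofReal α * (hzV n γ (α - 1) f x + hzV n γ (α - 1) g x)

lemma hz_nonlin_sub (n : ℕ) (γ α : ℝ) (hα : 1 < α) (f g : Euc n → ℝ) (x : Euc n) :
    ‖nonlin n γ α f x - nonlin n γ α g x‖ₑ ≤ hzPot n γ α f g x * ‖f x - g x‖ₑ := by
  have hw : 0 ≤ ‖x‖ ^ γ := by positivity
  unfold hzPot
  rw [hzV_eq n γ _ (by linarith), hzV_eq n γ _ (by linarith), Real.enorm_eq_ofReal_abs,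
    Real.enorm_eq_ofReal_abs, ← ENNReal.ofReal_add (by positivity) (by positivity),
    ← ENNReal.ofReal_mul (by linarith), ← ENNReal.ofReal_mul (by positivity)]
  apply ENNReal.ofReal_le_ofReal
  unfold nonlin
  rw [mul_assoc, mul_assoc, ← mul_sub, abs_mul, abs_of_nonneg hw]
  calc _ ≤ ‖x‖ ^ γ * (α * (|f x| ^ (α - 1) + |g x| ^ (α - 1)) * |f x - g x|) := by
        gcongr
        exact hz_lip α _ _ hα
    _ = _ := by ring

lemma hzV_quasi (n : ℕ) (γ β : ℝ) (hβ : 0 < β) (f g : Euc n → ℝ) (x : Euc n) :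
    hzV n γ β f x ≤ (2 : ℝ≥0∞) ^ β * (hzV n γ β (fun x => f x - g x) x + hzV n γ β g x) := by
  unfold hzV
  have : ‖f x‖ₑ ≤ ‖f x - g x‖ₑ + ‖g x‖ₑ := by
    simpa using enorm_add_le (f x - g x) (g x)
  calc _ ≤ ENNReal.ofReal (‖x‖ ^ γ) * (‖f x - g x‖ₑ + ‖g x‖ₑ) ^ β := by gcongr
    _ ≤ ENNReal.ofReal (‖x‖ ^ γ) * ((2 : ℝ≥0∞) ^ β * (‖f x - g x‖ₑ ^ β + ‖g x‖ₑ ^ β)) := by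
        gcongr
        exact hz_quasi _ _ β hβ
    _ = _ := by ring

lemma hz_prod_le (α : ℝ) (hα : 1 < α) (A B : ℝ≥0∞) :
    (A ^ (α - 1) + B ^ (α - 1)) * (A + B) ≤ 4 * (A ^ α + B ^ α) := by
  have key : ∀ A B : ℝ≥0∞, A ≤ B → (A ^ (α - 1) + B ^ (α - 1)) * (A + B) ≤ 4 * B ^ α := by
    intro A B h
    have e : B ^ α = B ^ (α - 1) * B := by
      nth_rewrite 3 [← ENNReal.rpow_one B]
      rw [← ENNReal.rpow_add_of_nonneg _ _ (by linarith) (by norm_num)]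
      congr 1; ring
    calc _ ≤ (B ^ (α - 1) + B ^ (α - 1)) * (B + B) := by
          have : 0 ≤ α - 1 := by linarith
          gcongr
      _ = _ := by rw [e]; ring
  rcases le_total A B with h | h
  · exact (key A B h).trans (by gcongr; exact le_add_self)
  · rw [add_comm A B, add_comm (A ^ (α - 1))]
    exact (key B A h).trans (by gcongr; exact le_self_add)

lemma hz_W_le (n : ℕ) (γ α : ℝ) (hα : 1 < α) (f g : Euc n → ℝ) (x : Euc n) :
    hzPot n γ α f g x * ‖f x - g x‖ₑ ≤
      ENNReal.ofReal α * 4 * (hzV n γ α f x + hzV n γ α g x) := by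
  unfold hzPot hzV
  have : ‖f x - g x‖ₑ ≤ ‖f x‖ₑ + ‖g x‖ₑ := enorm_sub_le
  calc _ = ENNReal.ofReal α * ENNReal.ofReal (‖x‖ ^ γ) *
        ((‖f x‖ₑ ^ (α - 1) + ‖g x‖ₑ ^ (α - 1)) * ‖f x - g x‖ₑ) := by ring
    _ ≤ ENNReal.ofReal α * ENNReal.ofReal (‖x‖ ^ γ) *
        ((‖f x‖ₑ ^ (α - 1) + ‖g x‖ₑ ^ (α - 1)) * (‖f x‖ₑ + ‖g x‖ₑ)) := by gcongr
    _ ≤ ENNReal.ofReal α * ENNReal.ofReal (‖x‖ ^ γ) * (4 * (‖f x‖ₑ ^ α + ‖g x‖ₑ ^ α)) :=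
        mul_le_mul' le_rfl (hz_prod_le α hα _ _)
    _ = _ := by ring

/-! ### Duhamel inequality -/

lemma hzPot_measurable (n : ℕ) (γ α : ℝ) (u₁ u₂ : ℝ → Euc n → ℝ)
    (h₁ : Measurable (Function.uncurry u₁)) (h₂ : Measurable (Function.uncurry u₂)) :
    Measurable (fun z : ℝ × Euc n => hzPot n γ α (u₁ z.1) (u₂ z.1) z.2) := by
  have h₁' : Measurable (fun z : ℝ × Euc n => u₁ z.1 z.2) := h₁
  have h₂' : Measurable (fun z : ℝ × Euc n => u₂ z.1 z.2) := h₂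
  unfold hzPot hzV
  fun_prop

lemma hz_ae_mem {X : Type*} [MeasurableSpace X] (ν : Measure X) [SFinite ν] (t : ℝ) :
    ∀ᵐ z ∂((volume.restrict (Set.Ioo (0 : ℝ) t)).prod ν), z.1 ∈ Set.Ioo 0 t := by
  have : ∀ᵐ τ ∂(volume.restrict (Set.Ioo (0 : ℝ) t)), τ ∈ Set.Ioo 0 t :=
    ae_restrict_mem measurableSet_Ioo
  exact Measure.quasiMeasurePreserving_fst.ae this

lemma hz_tonelli {X : Type*} [MeasurableSpace X] (ν : Measure X) [SFinite ν] (t : ℝ) (P : X → ℝ≥0∞) (mP : Measurable P)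
    (W : ℝ × X → ℝ≥0∞) (mW : Measurable W) (κ : ℝ → ℝ≥0∞) (mκ : Measurable κ)
    (K : ℝ → X → X → ℝ≥0∞) (mK0 : Measurable fun z : ℝ × X × X => K z.1 z.2.1 z.2.2)
    (hκ : ∀ θ : ℝ, 0 < θ → ∀ y : X, ∫⁻ x, K θ x y * P x ∂ν ≤ κ θ) :
    ∫⁻ x, P x * ∫⁻ z, K (t - z.1) x z.2 * W z
      ∂((volume.restrict (Set.Ioo (0 : ℝ) t)).prod ν) ∂ν ≤
    ∫⁻ τ in Set.Ioo 0 t, κ (t - τ) * ∫⁻ y, W (τ, y) ∂ν := by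
  have mK : Measurable (fun p : X × (ℝ × X) => K (t - p.2.1) p.1 p.2.2) := by
    have : Measurable (fun p : X × (ℝ × X) => (t - p.2.1, p.1, p.2.2)) := by fun_prop
    exact mK0.comp this
  have mW2 : Measurable (fun p : X × (ℝ × X) => W p.2) := mW.comp measurable_snd
  have mP2 : Measurable (fun p : X × (ℝ × X) => P p.1) :=
    mP.comp measurable_fst
  have mKW : Measurable (fun p : X × (ℝ × X) => K (t - p.2.1) p.1 p.2.2 * W p.2) :=
    mK.mul mW2
  have e1 : ∀ x, P x * ∫⁻ z, K (t - z.1) x z.2 * W z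
      ∂((volume.restrict (Set.Ioo (0 : ℝ) t)).prod ν) =
      ∫⁻ z, P x * (K (t - z.1) x z.2 * W z)
      ∂((volume.restrict (Set.Ioo (0 : ℝ) t)).prod ν) := by
    intro x
    exact (lintegral_const_mul _ (mKW.comp measurable_prodMk_left)).symm
  simp only [e1]
  rw [lintegral_lintegral_swap (mP2.mul mKW).aemeasurable]
  have e2 : ∫⁻ z, ∫⁻ x, P x * (K (t - z.1) x z.2 * W z)
      ∂ν ∂((volume.restrict (Set.Ioo (0 : ℝ) t)).prod ν) ≤
      ∫⁻ z, κ (t - z.1) * W z ∂((volume.restrict (Set.Ioo (0 : ℝ) t)).prod ν) := by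
    apply lintegral_mono_ae
    filter_upwards [hz_ae_mem ν t] with z hz
    have e : ∀ x, P x * (K (t - z.1) x z.2 * W z) =
        (K (t - z.1) x z.2 * P x) * W z := by
      intro x; ring
    simp only [e]
    rw [lintegral_mul_const]
    · exact mul_le_mul' (hκ _ (by linarith [hz.2]) _) le_rfl
    · exact Measurable.mul (mK.comp measurable_prodMk_right) mP
  refine e2.trans (le_of_eq ?_)
  rw [lintegral_prod]
  · apply lintegral_congr
    intro τ
    exact lintegral_const_mul (κ (t - τ)) (f := fun y => W (τ, y))
      (mW.comp measurable_prodMk_left)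
  · exact ((mκ.comp (by fun_prop : Measurable fun z : ℝ × X => t - z.1)).mul mW).aemeasurable

lemma hz_duhamel_abs {X : Type*} [MeasurableSpace X] (ν : Measure X) [SFinite ν] (T : ℝ)
    (V W : ℝ → X → ℝ≥0∞) (mV : Measurable fun z : ℝ × X => V z.1 z.2)
    (mW : Measurable fun z : ℝ × X => W z.1 z.2) 
    (K : ℝ → X → X → ℝ≥0∞) (mK : Measurable fun z : ℝ × X × X => K z.1 z.2.1 z.2.2)
    (h : ∀ᵐ p ∂((volume.restrict (Set.Ioo (0 : ℝ) T)).prod ν), W p.1 p.2 ≤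
      ∫⁻ z, K (p.1 - z.1) p.2 z.2 * (V z.1 z.2 * W z.1 z.2)
        ∂((volume.restrict (Set.Ioo (0 : ℝ) p.1)).prod ν)) :
    ∀ᵐ t ∂(volume.restrict (Set.Ioo (0 : ℝ) T)), ∀ κ : ℝ → ℝ≥0∞, Measurable κ →
      (∀ θ : ℝ, 0 < θ → ∀ y : X, ∫⁻ x, K θ x y * V t x ∂ν ≤ κ θ) →
      ∫⁻ x, V t x * W t x ∂ν ≤
        ∫⁻ τ in Set.Ioo 0 t, κ (t - τ) * ∫⁻ x, V τ x * W τ x ∂ν := by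
  have a := Measure.ae_ae_of_ae_prod h
  filter_upwards [a] with t a κ mκ hκ
  have mVt : Measurable (V t) := mV.comp measurable_prodMk_left
  refine le_trans ?_ (hz_tonelli ν t (V t) mVt (fun z : ℝ × X => V z.1 z.2 * W z.1 z.2)
    (mV.mul mW) κ mκ K mK hκ)
  apply lintegral_mono_ae
  filter_upwards [a] with x b
  exact mul_le_mul' le_rfl b

lemma hz_duhamel_pt (n : ℕ) (γ α t : ℝ) (hα : 1 < α) (u₁ u₂ : ℝ → Euc n → ℝ) (x : Euc n)
    (c v₁ v₂ : ℝ)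
    (i₁ : Integrable (fun z : ℝ × Euc n =>
        heatKernel n (t - z.1) x z.2 * nonlin n γ α (u₁ z.1) z.2)
      ((volume.restrict (Set.Ioo (0 : ℝ) t)).prod volume))
    (i₂ : Integrable (fun z : ℝ × Euc n =>
        heatKernel n (t - z.1) x z.2 * nonlin n γ α (u₂ z.1) z.2)
      ((volume.restrict (Set.Ioo (0 : ℝ) t)).prod volume))
    (f₁ : v₁ = c + ∫ z : ℝ × Euc n, heatKernel n (t - z.1) x z.2 * nonlin n γ α (u₁ z.1) z.2
        ∂((volume.restrict (Set.Ioo (0 : ℝ) t)).prod volume))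
    (f₂ : v₂ = c + ∫ z : ℝ × Euc n, heatKernel n (t - z.1) x z.2 * nonlin n γ α (u₂ z.1) z.2
        ∂((volume.restrict (Set.Ioo (0 : ℝ) t)).prod volume)) :
    ‖v₁ - v₂‖ₑ ≤ ∫⁻ z, ENNReal.ofReal (heatKernel n (t - z.1) x z.2) *
      (hzPot n γ α (u₁ z.1) (u₂ z.1) z.2 * ‖u₁ z.1 z.2 - u₂ z.1 z.2‖ₑ)
      ∂((volume.restrict (Set.Ioo (0 : ℝ) t)).prod volume) := by
  rw [f₁, f₂, add_sub_add_left_eq_sub, ← integral_sub i₁ i₂]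
  refine (enorm_integral_le_lintegral_enorm _).trans ?_
  apply lintegral_mono_ae
  filter_upwards [hz_ae_mem (volume : Measure (Euc n)) t] with z hz
  rw [← mul_sub, enorm_mul, Real.enorm_eq_ofReal_abs (heatKernel _ _ _ _),
    abs_of_nonneg (hz_heat_nonneg n _ (by linarith [hz.2]) _ _)]
  exact mul_le_mul' le_rfl (hz_nonlin_sub n γ α hα _ _ _)

lemma hz_duhamel (n : ℕ) (γ α T : ℝ) (hα : 1 < α) (u₀ : Euc n → ℝ) (u₁ u₂ : ℝ → Euc n → ℝ)
    (h₁ : IsMildSolution n γ α T u₀ u₁) (h₂ : IsMildSolution n γ α T u₀ u₂)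
    (Φ : ℝ → ℝ≥0∞)
    (hΦ : ∀ t, Φ t = ∫⁻ x, hzPot n γ α (u₁ t) (u₂ t) x * ‖u₁ t x - u₂ t x‖ₑ) :
    ∀ᵐ t ∂(volume.restrict (Set.Ioo (0 : ℝ) T)), ∀ κ : ℝ → ℝ≥0∞, Measurable κ →
      (∀ θ : ℝ, 0 < θ → ∀ y : Euc n, ∫⁻ x, ENNReal.ofReal (heatKernel n θ x y) *
        hzPot n γ α (u₁ t) (u₂ t) x ≤ κ θ) →
      Φ t ≤ ∫⁻ τ in Set.Ioo 0 t, κ (t - τ) * Φ τ := by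
  obtain ⟨m₁, e₁⟩ := h₁
  obtain ⟨m₂, e₂⟩ := h₂
  have m₁' : Measurable (fun z : ℝ × Euc n => u₁ z.1 z.2) := m₁
  have m₂' : Measurable (fun z : ℝ × Euc n => u₂ z.1 z.2) := m₂
  have mP := hzPot_measurable n γ α u₁ u₂ m₁ m₂
  have mW : Measurable (fun z : ℝ × Euc n => ‖u₁ z.1 z.2 - u₂ z.1 z.2‖ₑ) := by fun_prop
  simp only [hΦ]
  refine hz_duhamel_abs (volume : Measure (Euc n)) T (fun t x => hzPot n γ α (u₁ t) (u₂ t) x)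
    (fun t x => ‖u₁ t x - u₂ t x‖ₑ) mP mW (fun θ x y => ENNReal.ofReal (heatKernel n θ x y))
    (hz_heat_measurable n).ennreal_ofReal ?_
  filter_upwards [e₁, e₂] with p b₁ b₂
  exact hz_duhamel_pt n γ α p.1 hα u₁ u₂ p.2 _ _ _ b₁.2.1 b₂.2.1 b₁.2.2 b₂.2.2

/-! ### Gronwall-type step -/

lemma hz_gronwall (Φ : ℝ → ℝ≥0∞) (M : ℝ≥0∞) (hM : M < ⊤) (a b : ℝ)
    (h0 : ∀ᵐ τ ∂(volume.restrict (Set.Ioo 0 a)), Φ τ = 0)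
    (hb : ∀ t ∈ Set.Ioo a b, Φ t ≤ M)
    (hk : ∀ᵐ t ∂(volume.restrict (Set.Ioo a b)), ∃ κ : ℝ → ℝ≥0∞, Measurable κ ∧
      ∫⁻ θ in Set.Ioo 0 (b - a), κ θ ≤ 1 / 2 ∧ Φ t ≤ ∫⁻ τ in Set.Ioo 0 t, κ (t - τ) * Φ τ) :
    ∀ᵐ t ∂(volume.restrict (Set.Ioo a b)), Φ t = 0 := by
  have claim : ∀ k : ℕ, ∀ᵐ t ∂(volume.restrict (Set.Ioo a b)), Φ t ≤ (1 / 2) ^ k * M := by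
    intro k
    induction k with
    | zero =>
      filter_upwards [ae_restrict_mem measurableSet_Ioo] with t ht
      simpa using hb t ht
    | succ k ih =>
      set N := (1 / 2 : ℝ≥0∞) ^ k * M with hN
      filter_upwards [hk, ae_restrict_mem measurableSet_Ioo] with t ⟨κ, mκ, hκ, hΦ⟩ ht
      have g : ∀ᵐ τ : ℝ, τ ∈ Set.Ioo 0 t → κ (t - τ) * Φ τ ≤
          (Set.Ioo 0 (b - a)).indicator κ (t - τ) * N := by
        rw [ae_restrict_iff' measurableSet_Ioo] at h0 ih
        filter_upwards [h0, ih, Measure.ae_ne volume a] with τ c0 c1 c2 hτ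
        rcases lt_or_gt_of_ne c2 with h | h
        · rw [c0 ⟨hτ.1, h⟩]; simp
        · rw [Set.indicator_of_mem]
          · gcongr
            exact c1 ⟨h, hτ.2.trans ht.2⟩
          · exact ⟨by linarith [hτ.2], by linarith [ht.2]⟩
      calc Φ t ≤ ∫⁻ τ in Set.Ioo 0 t, κ (t - τ) * Φ τ := hΦ
        _ ≤ ∫⁻ τ in Set.Ioo 0 t, (Set.Ioo 0 (b - a)).indicator κ (t - τ) * N :=
          lintegral_mono_ae ((ae_restrict_iff' measurableSet_Ioo).2 g)
        _ ≤ ∫⁻ τ, (Set.Ioo 0 (b - a)).indicator κ (t - τ) * N := setLIntegral_le_lintegral _ _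
        _ = (∫⁻ τ, (Set.Ioo 0 (b - a)).indicator κ τ) * N := by
          rw [lintegral_mul_const, lintegral_sub_left_eq_self]
          exact (mκ.indicator measurableSet_Ioo).comp (by fun_prop)
        _ ≤ 1 / 2 * N := by
          rw [lintegral_indicator measurableSet_Ioo]
          gcongr
        _ = _ := by rw [hN]; ring
  filter_upwards [ae_all_iff.2 claim] with t ht
  have lim : Tendsto (fun k : ℕ => (1 / 2 : ℝ≥0∞) ^ k * M) atTop (nhds (0 * M)) := by
    apply ENNReal.Tendsto.mul_const
    · exact ENNReal.tendsto_pow_atTop_nhds_zero_of_lt_one (by simp)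
    · exact Or.inr hM.ne
  rw [zero_mul] at lim
  exact le_antisymm (ge_of_tendsto' lim ht) bot_le

lemma hz_small (c η : ℝ≥0∞) (hc : c < ⊤) (hη : 0 < η) (β : ℝ) (hβ : 0 < β) :
    ∃ ε : ℝ, 0 < ε ∧ c * ENNReal.ofReal ε ^ β ≤ η := by
  have h : Tendsto (fun e : ℝ => c * ENNReal.ofReal e ^ β) (nhds 0)
      (nhds (c * ENNReal.ofReal 0 ^ β)) := by
    apply Continuous.tendsto
    exact (ENNReal.continuous_const_mul hc.ne).comp
      (ENNReal.continuous_rpow_const.comp ENNReal.continuous_ofReal)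
  rw [ENNReal.ofReal_zero, ENNReal.zero_rpow_of_pos hβ, mul_zero] at h
  have h2 := (h.eventually (gt_mem_nhds hη)).filter_mono (nhdsWithin_le_nhds (s := Set.Ioi 0))
  obtain ⟨e, he, he2⟩ := (h2.and self_mem_nhdsWithin).exists
  exact ⟨e, he2, he.le⟩

lemma hz_small_time (κ : ℝ → ℝ≥0∞) (h : ∫⁻ t in Set.Ioi 0, κ t < ⊤) (η : ℝ≥0∞) (hη : η ≠ 0) :
    ∃ d : ℝ, 0 < d ∧ ∫⁻ t in Set.Ioo 0 d, κ t ≤ η := by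
  obtain ⟨δ, hδ, H⟩ := exists_pos_setLIntegral_lt_of_measure_lt h.ne hη
  obtain ⟨d, hd, hd2⟩ := hz_small 1 (δ / 2 ⊓ 1) (by simp)
    (lt_min (ENNReal.half_pos hδ.ne') one_pos) 1 one_pos
  refine ⟨d, hd, ?_⟩
  have hs : Set.Ioo 0 d ∩ Set.Ioi 0 = Set.Ioo 0 d := by
    ext x; simp; tauto
  have := H (Set.Ioo 0 d) (by
    rw [Measure.restrict_apply measurableSet_Ioo, hs, Real.volume_Ioo, sub_zero]
    simp only [one_mul, ENNReal.rpow_one] at hd2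
    rcases eq_or_ne δ ⊤ with h | h
    · rw [h]; exact ENNReal.ofReal_lt_top
    · exact (hd2.trans (min_le_left _ _)).trans_lt (ENNReal.half_lt_self hδ.ne' h))
  rw [Measure.restrict_restrict measurableSet_Ioo, hs] at this
  exact this.le

/-! ### Local extension -/

lemma hz_slice (n : ℕ) (u : ℝ → Euc n → ℝ) (h : Measurable (Function.uncurry u)) (t : ℝ) :
    Measurable (u t) := h.of_uncurry_left

lemma hz_lin (n : ℕ) (c : ℝ≥0∞) (f g : Euc n → ℝ≥0∞) (hf : Measurable f) (hg : Measurable g) :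
    ∫⁻ x, c * (f x + g x) = c * ((∫⁻ x, f x) + ∫⁻ x, g x) := by
  have h : Measurable (fun x => f x + g x) := hf.add hg
  rw [lintegral_const_mul _ h, lintegral_add_left hf]

lemma hz_extend (n : ℕ) (hn : 3 ≤ n) (γ α s T : ℝ) (q r : ℝ≥0∞) (hα : 1 < α)
    (hq : ENNReal.ofReal α ≤ q) (p : ℝ) (hp : (n : ℝ) / 2 < p)
    (hpq : ENNReal.ofReal ((α - 1) * p) ≤ q)
    (hr : 0 < r) (hrα : r ≤ ENNReal.ofReal (α - 1))
    (hcr : s + n * (q⁻¹).toReal = n - 2) (hγ : γ + 2 = (α - 1) * (n - 2))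
    (u₀ : Euc n → ℝ) (u₁ u₂ : ℝ → Euc n → ℝ)
    (h₁ : IsMildSolution n γ α T u₀ u₁) (h₂ : IsMildSolution n γ α T u₀ u₂)
    (hm₁ : ∀ t ∈ Set.Icc (0 : ℝ) T, herzNorm n s q r (u₁ t) < ⊤)
    (hm₂ : ∀ t ∈ Set.Icc (0 : ℝ) T, herzNorm n s q r (u₂ t) < ⊤)
    (hc₁ : HerzContinuousOn n s q r u₁ (Set.Icc 0 T))
    (hc₂ : HerzContinuousOn n s q r u₂ (Set.Icc 0 T))
    (Φ : ℝ → ℝ≥0∞)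
    (hΦ : ∀ t, Φ t = ∫⁻ x, hzPot n γ α (u₁ t) (u₂ t) x * ‖u₁ t x - u₂ t x‖ₑ)
    (a : ℝ) (ha : a ∈ Set.Ico 0 T)
    (h0 : ∀ᵐ τ ∂(volume.restrict (Set.Ioo 0 a)), Φ τ = 0) :
    ∃ δ : ℝ, 0 < δ ∧ ∀ b, a < b → b < a + δ → b ≤ T →
      ∀ᵐ t ∂(volume.restrict (Set.Ioo a b)), Φ t = 0 := by
  have hβ : 0 < α - 1 := by linarith
  have haI : a ∈ Set.Icc 0 T := ⟨ha.1, ha.2.le⟩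
  obtain ⟨C, hC, HK⟩ := hz_key_kernel n hn γ α s q r hα
    ((ENNReal.ofReal_le_ofReal (by linarith)).trans hq) p hp hpq hr hrα hcr hγ
  obtain ⟨D, hD, HL⟩ := hz_key_L1 n hn γ α s q r hα hq hr
    (hrα.trans (ENNReal.ofReal_le_ofReal (by linarith))) hcr hγ
  have sl₁ := hz_slice n u₁ h₁.1
  have sl₂ := hz_slice n u₂ h₂.1
  obtain ⟨κ₁, mκ₁, bκ₁, iκ₁⟩ := HK (u₁ a) (sl₁ a)
  obtain ⟨κ₂, mκ₂, bκ₂, iκ₂⟩ := HK (u₂ a) (sl₂ a)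
  set L : ℝ≥0∞ := ENNReal.ofReal α * 2 ^ (α - 1) with hL
  have hLt : L < ⊤ := ENNReal.mul_lt_top ENNReal.ofReal_lt_top (hz_two_lt _)
  have h8 : (0 : ℝ≥0∞) < 1 / 8 := by simp
  obtain ⟨ε, hε, hεs⟩ := hz_small (L * C) (1 / 8) (ENNReal.mul_lt_top hLt hC) h8 (α - 1) hβ
  have fin : ∀ κ : ℝ → ℝ≥0∞, Measurable κ → ∀ f : Euc n → ℝ, herzNorm n s q r f < ⊤ →
      ∫⁻ t in Set.Ioi 0, κ t ≤ C * herzNorm n s q r f ^ (α - 1) →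
      ∃ d : ℝ, 0 < d ∧ ∫⁻ t in Set.Ioo 0 d, L * κ t ≤ 1 / 8 := by
    intro κ mκ f hf hκ
    apply hz_small_time _ _ _ h8.ne'
    rw [lintegral_const_mul _ mκ]
    exact ENNReal.mul_lt_top hLt (hκ.trans_lt (ENNReal.mul_lt_top hC
      (ENNReal.rpow_lt_top_of_nonneg hβ.le hf.ne)))
  obtain ⟨d₁, hd₁, sd₁⟩ := fin κ₁ mκ₁ _ (hm₁ a haI) iκ₁
  obtain ⟨d₂, hd₂, sd₂⟩ := fin κ₂ mκ₂ _ (hm₂ a haI) iκ₂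
  obtain ⟨δ₁, hδ₁, c₁⟩ := hc₁ a haI ε hε
  obtain ⟨δ₂, hδ₂, c₂⟩ := hc₂ a haI ε hε
  refine ⟨min (min d₁ d₂) (min δ₁ δ₂), by positivity, ?_⟩
  intro b hab hb hbT
  have hb1 : b - a ≤ d₁ := by
    have := (min_le_left (min d₁ d₂) (min δ₁ δ₂)).trans (min_le_left _ _); linarith
  have hb2 : b - a ≤ d₂ := by
    have := (min_le_left (min d₁ d₂) (min δ₁ δ₂)).trans (min_le_right _ _); linarith
  have hb3 : b - a ≤ δ₁ := by
    have := (min_le_right (min d₁ d₂) (min δ₁ δ₂)).trans (min_le_left _ _); linarith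
  have hb4 : b - a ≤ δ₂ := by
    have := (min_le_right (min d₁ d₂) (min δ₁ δ₂)).trans (min_le_right _ _); linarith
  have near₁ : ∀ t ∈ Set.Ioo a b, herzNorm n s q r (fun x => u₁ t x - u₁ a x) <
      ENNReal.ofReal ε := by
    intro t ht
    apply c₁ t ⟨ha.1.trans ht.1.le, ht.2.le.trans hbT⟩
    rw [abs_of_pos (by linarith [ht.1])]
    linarith [ht.2]
  have near₂ : ∀ t ∈ Set.Ioo a b, herzNorm n s q r (fun x => u₂ t x - u₂ a x) <
      ENNReal.ofReal ε := by
    intro t ht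
    apply c₂ t ⟨ha.1.trans ht.1.le, ht.2.le.trans hbT⟩
    rw [abs_of_pos (by linarith [ht.1])]
    linarith [ht.2]
  -- uniform bound
  have bdd : ∀ u : ℝ → Euc n → ℝ, (∀ t, Measurable (u t)) →
      (∀ t ∈ Set.Ioo a b, herzNorm n s q r (fun x => u t x - u a x) < ENNReal.ofReal ε) →
      ∀ t ∈ Set.Ioo a b, ∫⁻ x, hzV n γ α (u t) x ≤
        (2 : ℝ≥0∞) ^ α * (D * ENNReal.ofReal ε ^ α + D * herzNorm n s q r (u a) ^ α) := by
    intro u mu hu t ht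
    have m1 : Measurable (fun x => u t x - u a x) := (mu t).sub (mu a)
    calc _ ≤ ∫⁻ x, (2 : ℝ≥0∞) ^ α * (hzV n γ α (fun x => u t x - u a x) x +
          hzV n γ α (u a) x) := lintegral_mono fun x => hzV_quasi n γ α (by linarith) _ _ x
      _ = (2 : ℝ≥0∞) ^ α * ((∫⁻ x, hzV n γ α (fun x => u t x - u a x) x) +
          ∫⁻ x, hzV n γ α (u a) x) :=
          hz_lin n _ _ _ (hzV_measurable n γ α _ m1) (hzV_measurable n γ α _ (mu a))
      _ ≤ (2 : ℝ≥0∞) ^ α * (D * herzNorm n s q r (fun x => u t x - u a x) ^ α +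
          D * herzNorm n s q r (u a) ^ α) :=
          mul_le_mul' le_rfl (add_le_add (HL _ m1) (HL _ (mu a)))
      _ ≤ _ := by
          have := (hu t ht).le
          have : 0 ≤ α := by linarith
          gcongr
  have bfin : ∀ f : Euc n → ℝ, herzNorm n s q r f < ⊤ →
      (2 : ℝ≥0∞) ^ α * (D * ENNReal.ofReal ε ^ α + D * herzNorm n s q r f ^ α) < ⊤ := by
    intro f hf
    have h0α : 0 ≤ α := by linarith
    exact ENNReal.mul_lt_top (hz_two_lt _) (ENNReal.add_lt_top.2
      ⟨ENNReal.mul_lt_top hD (ENNReal.rpow_lt_top_of_nonneg h0α ENNReal.ofReal_ne_top),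
        ENNReal.mul_lt_top hD (ENNReal.rpow_lt_top_of_nonneg h0α hf.ne)⟩)
  refine hz_gronwall Φ (ENNReal.ofReal α * 4 *
    ((2 : ℝ≥0∞) ^ α * (D * ENNReal.ofReal ε ^ α + D * herzNorm n s q r (u₁ a) ^ α) +
     (2 : ℝ≥0∞) ^ α * (D * ENNReal.ofReal ε ^ α + D * herzNorm n s q r (u₂ a) ^ α))) ?_ a b h0
    ?_ ?_
  · exact ENNReal.mul_lt_top (ENNReal.mul_lt_top ENNReal.ofReal_lt_top (by simp))
      (ENNReal.add_lt_top.2 ⟨bfin _ (hm₁ a haI), bfin _ (hm₂ a haI)⟩)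
  · intro t ht
    rw [hΦ t]
    calc _ ≤ ∫⁻ x, ENNReal.ofReal α * 4 * (hzV n γ α (u₁ t) x + hzV n γ α (u₂ t) x) :=
          lintegral_mono fun x => hz_W_le n γ α hα _ _ x
      _ = ENNReal.ofReal α * 4 * ((∫⁻ x, hzV n γ α (u₁ t) x) + ∫⁻ x, hzV n γ α (u₂ t) x) :=
          hz_lin n _ _ _ (hzV_measurable n γ α _ (sl₁ t)) (hzV_measurable n γ α _ (sl₂ t))
      _ ≤ _ := mul_le_mul' le_rfl (add_le_add (bdd u₁ sl₁ near₁ t ht) (bdd u₂ sl₂ near₂ t ht))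
  · have hd := hz_duhamel n γ α T hα u₀ u₁ u₂ h₁ h₂ Φ hΦ
    have hd' : ∀ᵐ t ∂(volume.restrict (Set.Ioo a b)), _ :=
      ae_restrict_of_ae_restrict_of_subset (Set.Ioo_subset_Ioo ha.1 hbT) hd
    filter_upwards [hd', ae_restrict_mem measurableSet_Ioo] with t hdt ht
    have mt₁ : Measurable (fun x => u₁ t x - u₁ a x) := (sl₁ t).sub (sl₁ a)
    have mt₂ : Measurable (fun x => u₂ t x - u₂ a x) := (sl₂ t).sub (sl₂ a)
    obtain ⟨κ₃, mκ₃, bκ₃, iκ₃⟩ := HK _ mt₁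
    obtain ⟨κ₄, mκ₄, bκ₄, iκ₄⟩ := HK _ mt₂
    have mκ : Measurable (fun θ => (L * κ₃ θ + L * κ₁ θ) + (L * κ₄ θ + L * κ₂ θ)) := by
      fun_prop
    refine ⟨_, mκ, ?_, hdt _ mκ ?_⟩
    · have sm : ∀ κ : ℝ → ℝ≥0∞, Measurable κ → ∀ f : Euc n → ℝ,
          herzNorm n s q r f < ENNReal.ofReal ε →
          ∫⁻ t in Set.Ioi 0, κ t ≤ C * herzNorm n s q r f ^ (α - 1) →
          ∫⁻ θ in Set.Ioo 0 (b - a), L * κ θ ≤ 1 / 8 := by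
        intro κ mκ f hf hκ
        calc _ ≤ ∫⁻ θ in Set.Ioi 0, L * κ θ :=
              lintegral_mono_set Set.Ioo_subset_Ioi_self
          _ = L * ∫⁻ θ in Set.Ioi 0, κ θ := lintegral_const_mul _ mκ
          _ ≤ L * (C * ENNReal.ofReal ε ^ (α - 1)) := by
              have := hf.le
              refine mul_le_mul' le_rfl (hκ.trans ?_)
              gcongr
          _ ≤ _ := by rw [← mul_assoc]; exact hεs
      rw [lintegral_add_left (by fun_prop), lintegral_add_left (by fun_prop),
        lintegral_add_left (by fun_prop)]
      calc _ ≤ (1 / 8 + 1 / 8 : ℝ≥0∞) + (1 / 8 + 1 / 8) := by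
            refine add_le_add (add_le_add ?_ ?_) (add_le_add ?_ ?_)
            · exact sm κ₃ mκ₃ _ (near₁ t ht) iκ₃
            · exact (lintegral_mono_set (Set.Ioo_subset_Ioo le_rfl hb1)).trans sd₁
            · exact sm κ₄ mκ₄ _ (near₂ t ht) iκ₄
            · exact (lintegral_mono_set (Set.Ioo_subset_Ioo le_rfl hb2)).trans sd₂
        _ = 1 / 2 := by
            have : (1 / 8 : ℝ≥0∞) = ENNReal.ofReal (1 / 8) := by
              rw [ENNReal.ofReal_div_of_pos (by norm_num)]; simp
            have h2 : (1 / 2 : ℝ≥0∞) = ENNReal.ofReal (1 / 2) := by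
              rw [ENNReal.ofReal_div_of_pos (by norm_num)]; simp
            rw [this, h2, ← ENNReal.ofReal_add (by norm_num) (by norm_num),
              ← ENNReal.ofReal_add (by norm_num) (by norm_num)]
            norm_num
    · intro θ hθ y
      have mg : Measurable (fun x : Euc n => ENNReal.ofReal (heatKernel n θ x y)) := by
        unfold heatKernel; fun_prop
      have one : ∀ u : ℝ → Euc n → ℝ, (∀ t, Measurable (u t)) → ∀ k l : ℝ → ℝ≥0∞,
          (∀ t : ℝ, 0 < t → ∀ y : Euc n, ∫⁻ x, ENNReal.ofReal (heatKernel n t x y) *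
            hzV n γ (α - 1) (u a) x ≤ k t) →
          (∀ t' : ℝ, 0 < t' → ∀ y : Euc n, ∫⁻ x, ENNReal.ofReal (heatKernel n t' x y) *
            hzV n γ (α - 1) (fun x => u t x - u a x) x ≤ l t') →
          ∫⁻ x, ENNReal.ofReal (heatKernel n θ x y) *
            (ENNReal.ofReal α * hzV n γ (α - 1) (u t) x) ≤ L * l θ + L * k θ := by
        intro u mu k l hk hl
        have m1 : Measurable (fun x => u t x - u a x) := (mu t).sub (mu a)
        have mv1 := hzV_measurable n γ (α - 1) _ m1
        have mv2 := hzV_measurable n γ (α - 1) _ (mu a)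
        calc _ ≤ ∫⁻ x, (L * (ENNReal.ofReal (heatKernel n θ x y) *
                hzV n γ (α - 1) (fun x => u t x - u a x) x) +
                L * (ENNReal.ofReal (heatKernel n θ x y) * hzV n γ (α - 1) (u a) x)) := by
              apply lintegral_mono
              intro x
              calc _ ≤ ENNReal.ofReal (heatKernel n θ x y) * (ENNReal.ofReal α *
                    ((2 : ℝ≥0∞) ^ (α - 1) * (hzV n γ (α - 1) (fun x => u t x - u a x) x +
                      hzV n γ (α - 1) (u a) x))) :=
                    mul_le_mul' le_rfl (mul_le_mul' le_rfl (hzV_quasi n γ _ hβ _ _ x))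
                _ = _ := by rw [hL]; ring
          _ = L * (∫⁻ x, ENNReal.ofReal (heatKernel n θ x y) *
                hzV n γ (α - 1) (fun x => u t x - u a x) x) +
              L * (∫⁻ x, ENNReal.ofReal (heatKernel n θ x y) * hzV n γ (α - 1) (u a) x) := by
              have mm1 : Measurable (fun x => ENNReal.ofReal (heatKernel n θ x y) *
                  hzV n γ (α - 1) (fun x => u t x - u a x) x) := mg.mul mv1
              have mm2 : Measurable (fun x => ENNReal.ofReal (heatKernel n θ x y) *
                  hzV n γ (α - 1) (u a) x) := mg.mul mv2
              rw [lintegral_add_left (mm1.const_mul _), lintegral_const_mul _ mm1,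
                lintegral_const_mul _ mm2]
          _ ≤ _ := add_le_add (mul_le_mul' le_rfl (hl θ hθ y)) (mul_le_mul' le_rfl (hk θ hθ y))
      calc _ = ∫⁻ x, (ENNReal.ofReal (heatKernel n θ x y) *
            (ENNReal.ofReal α * hzV n γ (α - 1) (u₁ t) x) +
            ENNReal.ofReal (heatKernel n θ x y) *
            (ENNReal.ofReal α * hzV n γ (α - 1) (u₂ t) x)) := by
            apply lintegral_congr
            intro x
            unfold hzPot
            ring
        _ = _ := lintegral_add_left
            (mg.mul ((hzV_measurable n γ (α - 1) _ (sl₁ t)).const_mul _)) _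
        _ ≤ _ := add_le_add (one u₁ sl₁ κ₁ κ₃ bκ₁ bκ₃) (one u₂ sl₂ κ₂ κ₄ bκ₂ bκ₄)

lemma hz_continuation (Φ : ℝ → ℝ≥0∞) (T : ℝ) (hT : 0 < T)
    (H : ∀ a ∈ Set.Ico 0 T, (∀ᵐ τ ∂(volume.restrict (Set.Ioo 0 a)), Φ τ = 0) →
      ∃ δ : ℝ, 0 < δ ∧ ∀ b, a < b → b < a + δ → b ≤ T →
        ∀ᵐ t ∂(volume.restrict (Set.Ioo a b)), Φ t = 0) :
    ∀ᵐ τ ∂(volume.restrict (Set.Ioo 0 T)), Φ τ = 0 := by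
  set S : Set ℝ := {a | ∀ᵐ τ ∂(volume.restrict (Set.Ioo 0 a)), Φ τ = 0} with hS
  have hcl : IsClosed S := by
    apply isClosed_of_closure_subset
    intro a ha
    have ex : ∀ k : ℕ, ∃ b ∈ S, a - 1 / (k + 1 : ℝ) < b := by
      intro k
      obtain ⟨b, hb, hd⟩ := Metric.mem_closure_iff.1 ha (1 / (k + 1 : ℝ)) (by positivity)
      rw [Real.dist_eq] at hd
      exact ⟨b, hb, by linarith [(abs_lt.1 hd).2]⟩
    choose b hb hb2 using ex
    have sub : Set.Ioo 0 a ⊆ ⋃ k, Set.Ioo 0 (b k) := by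
      intro x hx
      obtain ⟨k, hk⟩ := exists_nat_one_div_lt (sub_pos.2 hx.2)
      exact Set.mem_iUnion.2 ⟨k, hx.1, by linarith [hb2 k]⟩
    exact ae_restrict_of_ae_restrict_of_subset sub ((ae_restrict_iUnion_iff _ _).2 hb)
  have main : Set.Icc 0 T ⊆ S := by
    apply IsClosed.Icc_subset_of_forall_exists_gt (hcl.inter isClosed_Icc)
    · simp [hS]
    · rintro x ⟨hx, hxI⟩ y hy
      obtain ⟨δ, hδ, h⟩ := H x hxI hx
      set b := min (min y T) (x + δ / 2) with hbdef
      have hxb : x < b := lt_min (lt_min hy hxI.2) (by linarith)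
      have hbT : b ≤ T := (min_le_left _ _).trans (min_le_right _ _)
      have hby : b ≤ y := (min_le_left _ _).trans (min_le_left _ _)
      have hbd : b ≤ x + δ / 2 := min_le_right _ _
      refine ⟨b, ?_, hxb, hby⟩
      have h2 := h b hxb (by linarith) hbT
      have hx' : ∀ᵐ τ ∂(volume.restrict (Set.Ioo 0 x)), Φ τ = 0 := hx
      change ∀ᵐ τ ∂(volume.restrict (Set.Ioo 0 b)), Φ τ = 0
      rw [ae_restrict_iff' measurableSet_Ioo] at hx' h2 ⊢
      filter_upwards [hx', h2, Measure.ae_ne volume x] with τ c0 c1 c2 hτ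
      rcases lt_or_gt_of_ne c2 with h | h
      · exact c0 ⟨hτ.1, h⟩
      · exact c1 ⟨h, hτ.2⟩
  exact main ⟨hT.le, le_rfl⟩

lemma hz_final (n : ℕ) (hn : 3 ≤ n) (γ α s T : ℝ) (q r : ℝ≥0∞) (hα : 1 < α)
    (D : ℝ≥0∞) (hD : D < ⊤)
    (HL : ∀ f : Euc n → ℝ, Measurable f → ∫⁻ x, hzV n γ α f x ≤ D * herzNorm n s q r f ^ α)
    (u₁ u₂ : ℝ → Euc n → ℝ) (sl₁ : ∀ t, Measurable (u₁ t)) (sl₂ : ∀ t, Measurable (u₂ t))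
    (hT : 0 < T)
    (hc₁ : HerzContinuousOn n s q r u₁ (Set.Icc 0 T))
    (hc₂ : HerzContinuousOn n s q r u₂ (Set.Icc 0 T))
    (hae : ∀ᵐ t ∂(volume.restrict (Set.Ioo (0 : ℝ) T)), u₁ t =ᵐ[volume] u₂ t) :
    ∀ t ∈ Set.Icc (0 : ℝ) T, u₁ t =ᵐ[volume] u₂ t := by
  intro t ht
  have hα0 : 0 < α := by linarith
  have : Nonempty (Fin n) := ⟨⟨0, by omega⟩⟩
  have : Nontrivial (Euc n) := inferInstance
  have md : Measurable (fun x => u₁ t x - u₂ t x) := (sl₁ t).sub (sl₂ t)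
  have zero : ∫⁻ x, hzV n γ α (fun x => u₁ t x - u₂ t x) x = 0 := by
    refine le_antisymm (_root_.le_of_forall_pos_le_add fun η hη => ?_) bot_le
    rw [zero_add]
    obtain ⟨ε, hε, hs⟩ := hz_small ((2 : ℝ≥0∞) ^ α * (2 * D)) η
      (ENNReal.mul_lt_top (hz_two_lt _) (ENNReal.mul_lt_top (by simp) hD)) hη α hα0
    obtain ⟨δ₁, hδ₁, c₁⟩ := hc₁ t ht ε hε
    obtain ⟨δ₂, hδ₂, c₂⟩ := hc₂ t ht ε hε
    set δ := min δ₁ δ₂ with hδdef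
    have hδ : 0 < δ := lt_min hδ₁ hδ₂
    have hlt : max 0 (t - δ) < min T (t + δ) :=
      lt_min (max_lt hT (by linarith [ht.2])) (max_lt (by linarith [ht.1]) (by linarith))
    have nb : (ae (volume.restrict (Set.Ioo (max 0 (t - δ)) (min T (t + δ))))).NeBot := by
      rw [ae_restrict_neBot, Real.volume_Ioo]
      exact (ENNReal.ofReal_pos.2 (sub_pos.2 hlt)).ne'
    have h1 : ∀ᵐ t' ∂(volume.restrict (Set.Ioo (max 0 (t - δ)) (min T (t + δ)))),
        u₁ t' =ᵐ[volume] u₂ t' :=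
      ae_restrict_of_ae_restrict_of_subset
        (Set.Ioo_subset_Ioo (le_max_left _ _) (min_le_left _ _)) hae
    obtain ⟨t', e, ht'⟩ := (h1.and (ae_restrict_mem measurableSet_Ioo)).exists
    have g1 : 0 < t' := (le_max_left _ _).trans_lt ht'.1
    have g2 : t - δ < t' := (le_max_right _ _).trans_lt ht'.1
    have g3 : t' < T := ht'.2.trans_le (min_le_left _ _)
    have g4 : t' < t + δ := ht'.2.trans_le (min_le_right _ _)
    have dist : |t' - t| < δ := abs_lt.2 ⟨by linarith, by linarith⟩
    have n₁ := c₁ t' ⟨g1.le, g3.le⟩ (dist.trans_le (min_le_left _ _))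
    have n₂ := c₂ t' ⟨g1.le, g3.le⟩ (dist.trans_le (min_le_right _ _))
    have m1 : Measurable (fun x => u₁ t' x - u₁ t x) := (sl₁ t').sub (sl₁ t)
    have m2 : Measurable (fun x => u₂ t' x - u₂ t x) := (sl₂ t').sub (sl₂ t)
    have v1 := hzV_measurable n γ α _ m1
    have v2 := hzV_measurable n γ α _ m2
    calc _ ≤ ∫⁻ x, (2 : ℝ≥0∞) ^ α * (hzV n γ α (fun x => u₁ t' x - u₁ t x) x +
          hzV n γ α (fun x => u₂ t' x - u₂ t x) x) := by
          apply lintegral_mono_ae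
          filter_upwards [e] with x hx
          unfold hzV
          have tri : ‖u₁ t x - u₂ t x‖ₑ ≤ ‖u₁ t' x - u₁ t x‖ₑ + ‖u₂ t' x - u₂ t x‖ₑ := by
            rw [show u₁ t x - u₂ t x = (u₂ t' x - u₂ t x) - (u₁ t' x - u₁ t x) by rw [hx]; ring,
              add_comm]
            exact enorm_sub_le
          calc _ ≤ ENNReal.ofReal (‖x‖ ^ γ) *
                (‖u₁ t' x - u₁ t x‖ₑ + ‖u₂ t' x - u₂ t x‖ₑ) ^ α :=
                mul_le_mul' le_rfl (ENNReal.rpow_le_rpow tri hα0.le)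
            _ ≤ ENNReal.ofReal (‖x‖ ^ γ) * ((2 : ℝ≥0∞) ^ α *
                (‖u₁ t' x - u₁ t x‖ₑ ^ α + ‖u₂ t' x - u₂ t x‖ₑ ^ α)) :=
                mul_le_mul' le_rfl (hz_quasi _ _ α hα0)
            _ = _ := by ring
      _ = (2 : ℝ≥0∞) ^ α * ((∫⁻ x, hzV n γ α (fun x => u₁ t' x - u₁ t x) x) +
          ∫⁻ x, hzV n γ α (fun x => u₂ t' x - u₂ t x) x) := hz_lin n _ _ _ v1 v2
      _ ≤ (2 : ℝ≥0∞) ^ α * (D * ENNReal.ofReal ε ^ α + D * ENNReal.ofReal ε ^ α) := by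
          refine mul_le_mul' le_rfl (add_le_add ((HL _ m1).trans ?_) ((HL _ m2).trans ?_))
          · exact mul_le_mul' le_rfl (ENNReal.rpow_le_rpow n₁.le hα0.le)
          · exact mul_le_mul' le_rfl (ENNReal.rpow_le_rpow n₂.le hα0.le)
      _ = (2 : ℝ≥0∞) ^ α * (2 * D) * ENNReal.ofReal ε ^ α := by ring
      _ ≤ η := hs
  rw [lintegral_eq_zero_iff (hzV_measurable n γ α _ md)] at zero
  filter_upwards [zero, Measure.ae_ne volume (0 : Euc n)] with x hx hx0
  have hpos : 0 < ‖x‖ ^ γ := Real.rpow_pos_of_pos (norm_pos_iff.2 hx0) γ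
  simp only [hzV, Pi.zero_apply, mul_eq_zero, ENNReal.ofReal_eq_zero, not_le.2 hpos, false_or,
    ENNReal.rpow_eq_zero_iff, hα0, and_true, enorm_eq_zero, sub_eq_zero] at hx
  rcases hx with h | h
  · exact h
  · exact absurd h.2 (not_lt.2 hα0.le)

theorem uniqueness_double_critical
    (n : ℕ) (hn : 3 ≤ n) (γ α s T : ℝ) (q r : ℝ≥0∞)
    (hγ : -(min 2 (n : ℝ)) < γ) (hα : 1 < α)
    (hα' : max 1 (1 + γ / (n : ℝ)) ≤ α)
    (hs1 : γ / (α - 1) < s) (hs2 : s ≤ (n : ℝ))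
    (hq : ENNReal.ofReal α ≤ q) (hr : 0 < r)
    (hpos : 0 < s / (n : ℝ) + (q⁻¹).toReal)
    (hwd2 : s / (n : ℝ) + (q⁻¹).toReal < 1 ∨
      (s / (n : ℝ) + (q⁻¹).toReal = 1 ∧ r ≤ 1))
    (hcrit₁ : s / (n : ℝ) + (q⁻¹).toReal = (2 + γ) / ((n : ℝ) * (α - 1)))
    (hcrit₂ : (2 + γ) / ((n : ℝ) * (α - 1)) = ((n : ℝ) + γ) / ((n : ℝ) * α))
    (hcase : (q < ⊤ ∧ r ≤ ENNReal.ofReal (α - 1)) ∨ r ≤ min 1 (ENNReal.ofReal (α - 1)))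
    (hT : 0 < T) (u₀ : Euc n → ℝ) (hu₀ : MemHerzClosure n s q r u₀)
    (u₁ u₂ : ℝ → Euc n → ℝ)
    (h₁ : IsMildSolution n γ α T u₀ u₁) (h₂ : IsMildSolution n γ α T u₀ u₂)
    (hi₁ : u₁ 0 = u₀) (hi₂ : u₂ 0 = u₀)
    (hm₁ : ∀ t ∈ Set.Icc (0 : ℝ) T, MemHerzClosure n s q r (u₁ t))
    (hm₂ : ∀ t ∈ Set.Icc (0 : ℝ) T, MemHerzClosure n s q r (u₂ t))
    (hc₁ : HerzContinuousOn n s q r u₁ (Set.Icc 0 T))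
    (hc₂ : HerzContinuousOn n s q r u₂ (Set.Icc 0 T)) :
    ∀ t ∈ Set.Icc (0 : ℝ) T, u₁ t =ᵐ[volume] u₂ t := by
  have hn3 : (3 : ℝ) ≤ n := by exact_mod_cast hn
  have hβ : 0 < α - 1 := by linarith
  have hα0 : 0 < α := by linarith
  have hrα : r ≤ ENNReal.ofReal (α - 1) := by
    rcases hcase with h | h
    · exact h.2
    · exact h.trans (min_le_right _ _)
  have hγ2 : γ + 2 = (α - 1) * (n - 2) := by
    rw [div_eq_div_iff (by positivity) (by positivity)] at hcrit₂
    have : (n : ℝ) * ((2 + γ) * α - (n + γ) * (α - 1)) = 0 := by linarith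
    rcases mul_eq_zero.1 this with h | h
    · linarith
    · linarith
  have hcr : s + n * (q⁻¹).toReal = n - 2 := by
    rw [show 2 + γ = (α - 1) * (n - 2) by linarith] at hcrit₁
    field_simp at hcrit₁
    linarith
  -- the exponent
  obtain ⟨p, hp, hpq⟩ : ∃ p : ℝ, (n : ℝ) / 2 < p ∧ ENNReal.ofReal ((α - 1) * p) ≤ q := by
    rcases eq_or_ne q ⊤ with h | h
    · exact ⟨n, by linarith, by simp [h]⟩
    · have hqα : α ≤ q.toReal := (ENNReal.ofReal_le_iff_le_toReal h).1 hq
      have hq0 : 0 < q.toReal := by linarith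
      refine ⟨q.toReal / (α - 1), ?_, ?_⟩
      · rw [ENNReal.toReal_inv] at hcr
        rw [div_lt_iff₀ hβ] at hs1
        have e : γ = (α - 1) * (n - 2) - 2 := by linarith
        have e2 : s = n - 2 - n * q.toReal⁻¹ := by linarith
        have e3 : (n : ℝ) * q.toReal⁻¹ * (α - 1) < 2 := by
          rw [e, e2] at hs1; linarith
        rw [lt_div_iff₀ hβ]
        have e4 : (n : ℝ) * q.toReal⁻¹ * (α - 1) * q.toReal = n * (α - 1) := by field_simp
        have e5 := mul_lt_mul_of_pos_right e3 hq0
        linarith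
      · rw [mul_div_cancel₀ _ hβ.ne', ENNReal.ofReal_toReal h]
  obtain ⟨D, hD, HL⟩ := hz_key_L1 n hn γ α s q r hα hq hr
    (hrα.trans (ENNReal.ofReal_le_ofReal (by linarith))) hcr hγ2
  have sl₁ := hz_slice n u₁ h₁.1
  have sl₂ := hz_slice n u₂ h₂.1
  refine hz_final n hn γ α s T q r hα D hD HL u₁ u₂ sl₁ sl₂ hT hc₁ hc₂ ?_
  have cont := hz_continuation
    (fun t => ∫⁻ x, hzPot n γ α (u₁ t) (u₂ t) x * ‖u₁ t x - u₂ t x‖ₑ) T hT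
    (fun a ha h0 => hz_extend n hn γ α s T q r hα hq p hp hpq hr hrα hcr hγ2 u₀ u₁ u₂ h₁ h₂
      (fun t ht => (hm₁ t ht).1) (fun t ht => (hm₂ t ht).1) hc₁ hc₂ _ (fun _ => rfl) a ha h0)
  have : Nonempty (Fin n) := ⟨⟨0, by omega⟩⟩
  have : Nontrivial (Euc n) := inferInstance
  filter_upwards [cont] with t ht
  have mP : Measurable (fun x => hzPot n γ α (u₁ t) (u₂ t) x) := by
    unfold hzPot
    exact ((hzV_measurable n γ _ _ (sl₁ t)).add (hzV_measurable n γ _ _ (sl₂ t))).const_mul _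
  have mW : Measurable (fun x => ‖u₁ t x - u₂ t x‖ₑ) := ((sl₁ t).sub (sl₂ t)).enorm
  have mPW : Measurable (fun x => hzPot n γ α (u₁ t) (u₂ t) x * ‖u₁ t x - u₂ t x‖ₑ) := mP.mul mW
  rw [lintegral_eq_zero_iff mPW] at ht
  filter_upwards [ht, Measure.ae_ne volume (0 : Euc n)] with x hx hx0
  have hpos : 0 < ‖x‖ ^ γ := Real.rpow_pos_of_pos (norm_pos_iff.2 hx0) γ
  have zero_of : ∀ f : Euc n → ℝ, hzV n γ (α - 1) f x = 0 → f x = 0 := by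
    intro f hf
    unfold hzV at hf
    rcases mul_eq_zero.1 hf with h | h
    · exact absurd (ENNReal.ofReal_eq_zero.1 h) (not_le.2 hpos)
    · rw [ENNReal.rpow_eq_zero_iff_of_pos hβ] at h
      simpa using h
  rcases mul_eq_zero.1 hx with h | h
  · unfold hzPot at h
    rcases mul_eq_zero.1 h with h | h
    · exact absurd (ENNReal.ofReal_eq_zero.1 h) (not_le.2 hα0)
    · rw [add_eq_zero] at h
      rw [zero_of _ h.1, zero_of _ h.2]
  · rw [enorm_eq_zero, sub_eq_zero] at h
    exact h
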